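/- (Berra–Carena–Pradolini, fractional integral case) Let 0<α<n, 1≤p<n/α and let q be defined by 1/q = 1/p − α/n. If u and v are weights on ℝ^n such that u ∈ A_1 and v^{q/p} ∈ A_1, then there exists a positive constant C such that for every f and every t>0, (uv^{q/p})({x ∈ ℝ^n : I_α(fv)(x)/v(x) > t})^{1/q} ≤ (C/t) (∫_{ℝ^n} |f(x)|^p u(x)^{p/q} v(x) dx)^{1/p}, where uv^{q/p} denotes the weight u·v^{q/p}. -/

import Mathlib

open MeasureTheory ENNReal Set

noncomputable section

/-- Euclidean space `ℝ^n`. -/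
abbrev ESp (n : ℕ) := EuclideanSpace ℝ (Fin n)

/-- An axis-parallel cube with positive finite side length. -/
def IsCube {n : ℕ} (Q : Set (ESp n)) : Prop :=
  ∃ (c : Fin n → ℝ) (h : ℝ), 0 < h ∧ Q = {x : ESp n | ∀ i, c i ≤ x i ∧ x i ≤ c i + h}

/-- The measure `w(E) = ∫_E w` associated to a weight `w`. -/
def wMeas {n : ℕ} (w : ESp n → ℝ) (E : Set (ESp n)) : ℝ≥0∞ :=
  ∫⁻ x in E, ENNReal.ofReal (w x)

/-- A weight: a nonnegative locally integrable function, positive (and finite) a.e. -/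
def IsWeight {n : ℕ} (w : ESp n → ℝ) : Prop :=
  Measurable w ∧ (∀ x, 0 ≤ w x) ∧ (∀ᵐ x ∂(volume : Measure (ESp n)), 0 < w x) ∧
    ∀ Q : Set (ESp n), IsCube Q → wMeas w Q < ⊤

/-- `C` is an admissible `A₁` constant for `w`. -/
def A1Const {n : ℕ} (w : ESp n → ℝ) (C : ℝ≥0∞) : Prop :=
  ∀ Q : Set (ESp n), IsCube Q →
    (volume Q)⁻¹ * wMeas w Q ≤ C * essInf (fun x => ENNReal.ofReal (w x)) (volume.restrict Q)

/-- The Muckenhoupt class `A₁`. -/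
def IsA1 {n : ℕ} (w : ESp n → ℝ) : Prop := ∃ C : ℝ≥0∞, C < ⊤ ∧ A1Const w C

/-- The Muckenhoupt class `A_p`, `1 < p < ∞`. -/
def IsAp {n : ℕ} (w : ESp n → ℝ) (p : ℝ) : Prop :=
  ∃ C : ℝ≥0∞, C < ⊤ ∧ ∀ Q : Set (ESp n), IsCube Q →
    ((volume Q)⁻¹ * wMeas w Q) *
      ((volume Q)⁻¹ * ∫⁻ x in Q, ENNReal.ofReal (w x) ^ (1 - p / (p - 1))) ^ (p - 1) ≤ C

/-- The class `A_∞ = ⋃_{p ≥ 1} A_p`. -/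
def IsAinfty {n : ℕ} (w : ESp n → ℝ) : Prop :=
  IsA1 w ∨ ∃ p : ℝ, 1 < p ∧ IsAp w p

/-- The Hardy–Littlewood maximal function (over cubes). -/
def maxFn {n : ℕ} (f : ESp n → ℝ) (x : ESp n) : ℝ≥0∞ :=
  ⨆ (Q : Set (ESp n)) (_ : IsCube Q) (_ : x ∈ Q),
    (volume Q)⁻¹ * ∫⁻ y in Q, ENNReal.ofReal |f y|

/-- The Fujii–Wilson `A_∞` constant. -/
def FW {n : ℕ} (w : ESp n → ℝ) : ℝ≥0∞ :=
  ⨆ (Q : Set (ESp n)) (_ : IsCube Q),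
    (wMeas w Q)⁻¹ * ∫⁻ x in Q, maxFn (Q.indicator w) x

/-- The weighted weak `L^{q,∞}(w)` quasinorm of `g`. -/
def wnorm {n : ℕ} (g : ESp n → ℝ≥0∞) (q : ℝ) (w : ESp n → ℝ) : ℝ≥0∞ :=
  ⨆ (t : ℝ) (_ : 0 < t), ENNReal.ofReal t * (wMeas w {x | ENNReal.ofReal t < g x}) ^ (1 / q)

/-- The weighted `L¹(w)` norm. -/
def L1norm {n : ℕ} (f : ESp n → ℝ) (w : ESp n → ℝ) : ℝ≥0∞ :=
  ∫⁻ x, ENNReal.ofReal (|f x| * w x)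

/-- The fractional maximal operator `M_α`. -/
def fracM {n : ℕ} (α : ℝ) (f : ESp n → ℝ) (x : ESp n) : ℝ≥0∞ :=
  ⨆ (Q : Set (ESp n)) (_ : IsCube Q) (_ : x ∈ Q),
    ((volume Q) ^ (1 - α / (n : ℝ)))⁻¹ * ∫⁻ y in Q, ENNReal.ofReal |f y|

/-- The fractional integral (Riesz potential) `I_α`. -/
def fracI {n : ℕ} (α : ℝ) (f : ESp n → ℝ) (x : ESp n) : ℝ :=
  ∫ y, f y / dist x y ^ ((n : ℝ) - α)

/-- The multi(sub)linear maximal function `𝓜`. -/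
def multiM {n m : ℕ} (f : Fin m → ESp n → ℝ) (x : ESp n) : ℝ≥0∞ :=
  ⨆ (Q : Set (ESp n)) (_ : IsCube Q) (_ : x ∈ Q),
    ∏ i, (volume Q)⁻¹ * ∫⁻ y in Q, ENNReal.ofReal |f i y|

/-- The multi(sub)linear fractional maximal operator `𝓜_α`. -/
def multiMα {n m : ℕ} (α : ℝ) (f : Fin m → ESp n → ℝ) (x : ESp n) : ℝ≥0∞ :=
  ⨆ (Q : Set (ESp n)) (_ : IsCube Q) (_ : x ∈ Q),
    ∏ i, ((volume Q) ^ (1 - α / ((m : ℝ) * (n : ℝ))))⁻¹ * ∫⁻ y in Q, ENNReal.ofReal |f i y|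

/-- The multilinear fractional integral `𝓘_α`. -/
def multiIα {n m : ℕ} (α : ℝ) (f : Fin m → ESp n → ℝ) (x : ESp n) : ℝ :=
  ∫ y : Fin m → ESp n, (∏ i, f i (y i)) / (∑ i, dist x (y i)) ^ ((m : ℝ) * (n : ℝ) - α)

/-- The multilinear class `A_{(1,…,1)}`. -/
def A11 {n m : ℕ} (w : Fin m → ESp n → ℝ) : Prop :=
  ∃ C : ℝ≥0∞, C < ⊤ ∧ ∀ Q : Set (ESp n), IsCube Q →
    ((volume Q)⁻¹ * ∫⁻ x in Q, ENNReal.ofReal (∏ i, w i x ^ ((m : ℝ)⁻¹))) ^ (m : ℝ) *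
      ∏ i, (essInf (fun x => ENNReal.ofReal (w i x)) (volume.restrict Q))⁻¹ ≤ C

/-!
Put `s = p / q` and `V = v ^ (q / p)`. Over dyadic scales `k`, with `B` the cube of side about
`2 ^ k` centred at `x` and `F = |f| ^ p v`, Hölder's inequality and `v = V ^ s ∈ A₁` bound
`I_α(f v)(x) / v(x)` by `∑ₖ aₖ(x)`, where `aₖ(x) ^ p = (V(x) |B|) ^ (-s) ∫_B F`.

The sum is controlled through `Dₖ(x) = V(x) u(B)`, which grows geometrically in `k` because
`u ∈ A₁`. Let `M = ∫ F u ^ s`. At the scales with `Dₖ > ρ` the `A₁` condition on `u` gives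
`aₖ ^ p ≲ M Dₖ ^ (-s)`, a convergent geometric series. At the scales with `Dₖ ≤ ρ`, either every
`aₖ ^ p` is at most a multiple of `(Dₖ / ρ) ^ ε`, and the sum is again geometric, or `x` lies in one
of the exceptional sets `Zₖ` on which that bound fails. Chebyshev's inequality and Fubini's theorem
estimate the total `u V`-measure of the `Zₖ` once one knows
`∫_B u V ^ γ ≲ u(B) ⟨V⟩_B ^ γ` for some small `γ > 0`, and then `ε = 1 - s - γ`. By Chebyshev's
inequality the set `{V > λ ⟨V⟩_B}` fills at most a fraction `1 / λ` of `B`, so this follows from the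
`A_∞` property of `u`, which in turn comes from iterating Calderón–Zygmund stopping cubes. The
weak-type inequality results from choosing `ρ` to balance the two parts.
-/

namespace MixedWeakType

lemma rpow_ne_zero_of_ne_top {x : ℝ≥0∞} (hx₀ : x ≠ 0) (hx : x ≠ ⊤) (s : ℝ) : x ^ s ≠ 0 :=
  (ENNReal.rpow_pos (pos_iff_ne_zero.2 hx₀) hx).ne'

lemma rpow_mul_rpow_mul_rpow_of_add_eq_one {x : ℝ≥0∞} (hx₀ : x ≠ 0) (hx : x ≠ ⊤) {a b c : ℝ}
    (h : a + b + c = 1) : x ^ a * x ^ b * x ^ c = x := by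
  rw [← ENNReal.rpow_add _ _ hx₀ hx, ← ENNReal.rpow_add _ _ hx₀ hx, h, ENNReal.rpow_one]

lemma inv_le_mul_inv_of_le_mul {a b c : ℝ≥0∞} (hb₀ : b ≠ 0) (hb : b ≠ ⊤) (h : b ≤ c * a) :
    a⁻¹ ≤ c * b⁻¹ := by
  rw [← div_eq_mul_inv, ENNReal.le_div_iff_mul_le (.inl hb₀) (.inl hb), mul_comm, ← div_eq_mul_inv]
  exact ENNReal.div_le_of_le_mul h

section GeometricSums

lemma tsum_indicator_le_geometric {S : Set ℤ} {φ : ℤ → ℝ≥0∞} {r : ℝ≥0∞}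
    (h : ∀ l ∈ S, ∀ j : ℕ, φ (l - j) ≤ r ^ j) : ∑' k, S.indicator φ k ≤ (1 - r)⁻¹ := by
  classical
  rw [ENNReal.tsum_eq_iSup_sum]
  refine iSup_le fun T ↦ ?_
  rw [Finset.sum_indicator_eq_sum_filter]
  obtain hT | hT := (T.filter (· ∈ S)).eq_empty_or_nonempty
  · simp [hT]
  obtain ⟨l, hl, hmax⟩ := (T.filter (· ∈ S)).exists_maximal hT
  have hle : ∀ k ∈ T.filter (· ∈ S), k ≤ l := fun k hk ↦
    (le_total k l).elim id fun hlk ↦ hmax hk hlk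
  have hinj : InjOn (fun k : ℤ ↦ (l - k).toNat) (T.filter (· ∈ S) : Set ℤ) := by
    intro a ha b hb hab
    have := hle a ha
    have := hle b hb
    simp only at hab
    omega
  calc ∑ k ∈ T.filter (· ∈ S), φ k
      ≤ ∑ k ∈ T.filter (· ∈ S), r ^ (l - k).toNat := by
        refine Finset.sum_le_sum fun k hk ↦ ?_
        have := h l (Finset.mem_filter.1 hl).2 (l - k).toNat
        rwa [Int.toNat_of_nonneg (sub_nonneg.2 (hle k hk)), sub_sub_self] at this
    _ = ∑ j ∈ (T.filter (· ∈ S)).image fun k ↦ (l - k).toNat, r ^ j :=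
        (Finset.sum_image hinj).symm
    _ ≤ (1 - r)⁻¹ := (ENNReal.sum_le_tsum _).trans_eq (ENNReal.tsum_geometric r)

lemma tsum_indicator_le_geometric' {S : Set ℤ} {φ : ℤ → ℝ≥0∞} {r : ℝ≥0∞}
    (h : ∀ l ∈ S, ∀ j : ℕ, φ (l + j) ≤ r ^ j) : ∑' k, S.indicator φ k ≤ (1 - r)⁻¹ := by
  rw [← (Equiv.neg ℤ).tsum_eq]
  refine tsum_indicator_le_geometric (S := -S) (φ := fun k ↦ φ (-k)) fun l hl j ↦ ?_
  simpa only [neg_sub, sub_eq_add_neg, neg_add, neg_neg] using h (-l) hl j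

variable {g : ℤ → ℝ≥0∞} {θ : ℝ≥0∞}

lemma le_pow_mul_of_le_mul_succ (hg : ∀ k, g k ≤ θ * g (k + 1)) (k : ℤ) (j : ℕ) :
    g k ≤ θ ^ j * g (k + j) := by
  induction j with
  | zero => simp
  | succ j ih =>
    calc g k ≤ θ ^ j * g (k + j) := ih
      _ ≤ θ ^ j * (θ * g (k + j + 1)) := by gcongr; exact hg _
      _ = θ ^ (j + 1) * g (k + ↑(j + 1)) := by
        rw [pow_succ, mul_assoc, Nat.cast_succ, ← add_assoc]

lemma tsum_indicator_le_div_rpow_le (hg : ∀ k, g k ≤ θ * g (k + 1)) (ρ : ℝ≥0∞) {s : ℝ}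
    (hs : 0 < s) :
    ∑' k, {k | g k ≤ ρ}.indicator (fun k ↦ (g k / ρ) ^ s) k ≤ (1 - θ ^ s)⁻¹ := by
  refine tsum_indicator_le_geometric fun l hl j ↦ ?_
  rw [← ENNReal.rpow_natCast, ← ENNReal.rpow_mul, mul_comm s, ENNReal.rpow_mul,
    ENNReal.rpow_natCast]
  gcongr
  refine ENNReal.div_le_of_le_mul ?_
  calc g (l - j) ≤ θ ^ j * g (l - j + j) := le_pow_mul_of_le_mul_succ hg _ _
    _ ≤ θ ^ j * ρ := by rw [sub_add_cancel]; gcongr; exact hl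

lemma tsum_indicator_ge_div_rpow_le (hg : ∀ k, g k ≤ θ * g (k + 1)) (ρ : ℝ≥0∞) {s : ℝ}
    (hs : 0 < s) :
    ∑' k, {k | ρ ≤ g k}.indicator (fun k ↦ (ρ / g k) ^ s) k ≤ (1 - θ ^ s)⁻¹ := by
  refine tsum_indicator_le_geometric' fun l hl j ↦ ?_
  rw [← ENNReal.rpow_natCast, ← ENNReal.rpow_mul, mul_comm s, ENNReal.rpow_mul,
    ENNReal.rpow_natCast]
  gcongr
  exact ENNReal.div_le_of_le_mul (le_trans hl (le_pow_mul_of_le_mul_succ hg l j))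

lemma tsum_le_of_two_regimes {a : ℤ → ℝ≥0∞} {A B ρ : ℝ≥0∞} {s t : ℝ} (hs : 0 < s) (ht : 0 < t)
    (hg : ∀ k, g k ≤ θ * g (k + 1)) (hlow : ∀ k, g k ≤ ρ → a k ≤ A * (g k / ρ) ^ s)
    (hhigh : ∀ k, ρ ≤ g k → a k ≤ B * (ρ / g k) ^ t) :
    ∑' k, a k ≤ A * (1 - θ ^ s)⁻¹ + B * (1 - θ ^ t)⁻¹ := by
  classical
  calc ∑' k, a k
      ≤ ∑' k, (A * {k | g k ≤ ρ}.indicator (fun k ↦ (g k / ρ) ^ s) k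
          + B * {k | ρ ≤ g k}.indicator (fun k ↦ (ρ / g k) ^ t) k) := by
        refine ENNReal.tsum_le_tsum fun k ↦ ?_
        obtain hk | hk := le_total (g k) ρ
        · rw [indicator_of_mem (s := {k | g k ≤ ρ}) hk]
          exact (hlow k hk).trans le_self_add
        · rw [indicator_of_mem (s := {k | ρ ≤ g k}) hk]
          exact (hhigh k hk).trans le_add_self
    _ ≤ A * (1 - θ ^ s)⁻¹ + B * (1 - θ ^ t)⁻¹ := by
        rw [ENNReal.tsum_add, ENNReal.tsum_mul_left, ENNReal.tsum_mul_left]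
        gcongr
        · exact tsum_indicator_le_div_rpow_le hg ρ hs
        · exact tsum_indicator_ge_div_rpow_le hg ρ ht

end GeometricSums

section Decay

/-- The factor by which the second of two measures related by an `A₁`-type inequality with
constant `C` shrinks when passing from a set to a subset of half its first measure. -/
def decay (C : ℝ≥0∞) : ℝ≥0∞ := 1 - (2 * C)⁻¹

lemma decay_lt_one {C : ℝ≥0∞} (hC : C ≠ ⊤) : decay C < 1 :=
  ENNReal.sub_lt_self ENNReal.one_ne_top one_ne_zero (ENNReal.inv_ne_zero.2 (by finiteness))

lemma inv_one_sub_decay_rpow_ne_top {C : ℝ≥0∞} (hC : C ≠ ⊤) {s : ℝ} (hs : 0 < s) :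
    (1 - decay C ^ s)⁻¹ ≠ ⊤ :=
  ENNReal.inv_ne_top.2 (tsub_pos_of_lt (ENNReal.rpow_lt_one (decay_lt_one hC) hs)).ne'

lemma measure_le_decay_mul {X : Type*} [MeasurableSpace X] {μ ν : Measure X} {C : ℝ≥0∞}
    {Q E : Set X} (hE : MeasurableSet E) (hEQ : E ⊆ Q) (hμ₀ : μ Q ≠ 0) (hμ : μ Q ≠ ⊤)
    (hν : ν Q ≠ ⊤) (hA : μ (Q \ E) * ν Q ≤ C * μ Q * ν (Q \ E)) (hhalf : 2 * μ E ≤ μ Q) :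
    ν E ≤ decay C * ν Q := by
  have split : ∀ ρ : Measure X, ρ (Q \ E) + ρ E = ρ Q := fun ρ ↦ by
    simpa only [inter_eq_self_of_subset_right hEQ] using measure_sdiff_add_inter (μ := ρ) Q hE
  have hle : μ E ≤ μ (Q \ E) := by
    rw [two_mul, ← split μ] at hhalf
    exact (ENNReal.add_le_add_iff_right (measure_ne_top_of_subset hEQ hμ)).1 hhalf
  have hcompl : ν Q ≤ 2 * C * ν (Q \ E) := by
    refine (ENNReal.mul_le_mul_iff_right hμ₀ hμ).1 ?_
    calc μ Q * ν Q ≤ 2 * μ (Q \ E) * ν Q := by rw [← split μ, two_mul]; gcongr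
      _ = 2 * (μ (Q \ E) * ν Q) := by ring
      _ ≤ 2 * (C * μ Q * ν (Q \ E)) := by gcongr
      _ = μ Q * (2 * C * ν (Q \ E)) := by ring
  have hinv : (2 * C)⁻¹ * ν Q ≤ ν (Q \ E) := by
    rw [mul_comm, ← div_eq_mul_inv]
    exact ENNReal.div_le_of_le_mul' hcompl
  calc ν E = ν Q - ν (Q \ E) := by
        rw [← split ν, ENNReal.add_sub_cancel_left (measure_ne_top_of_subset sdiff_subset hν)]
    _ ≤ ν Q - (2 * C)⁻¹ * ν Q := tsub_le_tsub_left hinv _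
    _ = decay C * ν Q := by rw [decay, ENNReal.sub_mul fun _ _ ↦ hν, one_mul]

end Decay

variable {ι : Type*}

section Weights

variable [Fintype ι]

/-- The measure `w(E) = ∫_E w` of a weight. -/
abbrev weightMeasure (w : (ι → ℝ) → ℝ≥0∞) : Measure (ι → ℝ) := volume.withDensity w

/-- `w` is an `A₁` weight with constant `C`. Cubes are encoded as closed balls of the sup norm of
`ι → ℝ`, and the essential infimum of `w` over a cube through the almost everywhere bound. -/
structure IsA1Weight (w : (ι → ℝ) → ℝ≥0∞) (C : ℝ≥0∞) : Prop where
  measurable : Measurable w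
  ae_ne_zero : ∀ᵐ x, w x ≠ 0
  ae_ne_top : ∀ᵐ x, w x ≠ ⊤
  const_ne_top : C ≠ ⊤
  ae_le : ∀ (x : ι → ℝ) (r : ℝ), 0 < r → ∀ᵐ y ∂volume.restrict (Metric.closedBall x r),
    weightMeasure w (Metric.closedBall x r) ≤ C * volume (Metric.closedBall x r) * w y

variable {w : (ι → ℝ) → ℝ≥0∞} {C : ℝ≥0∞}

lemma volume_closedBall_ne_zero (x : ι → ℝ) {r : ℝ} (hr : 0 < r) :
    volume (Metric.closedBall x r) ≠ 0 := (Metric.measure_closedBall_pos volume x hr).ne'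

lemma volume_closedBall_ne_top (x : ι → ℝ) (r : ℝ) : volume (Metric.closedBall x r) ≠ ⊤ :=
  measure_closedBall_lt_top.ne

lemma IsA1Weight.volume_mul_le (hw : IsA1Weight w C) {x : ι → ℝ} {r : ℝ} (hr : 0 < r)
    {E : Set (ι → ℝ)} (hE : MeasurableSet E) (hEB : E ⊆ Metric.closedBall x r) :
    volume E * weightMeasure w (Metric.closedBall x r)
      ≤ C * volume (Metric.closedBall x r) * weightMeasure w E := by
  rw [withDensity_apply _ hE, ← lintegral_const_mul _ hw.measurable, mul_comm, ← setLIntegral_const]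
  exact lintegral_mono_ae (ae_restrict_of_ae_restrict_of_subset hEB (hw.ae_le x r hr))

lemma IsA1Weight.measure_closedBall_ne_top (hw : IsA1Weight w C) (x : ι → ℝ) {r : ℝ} (hr : 0 < r) :
    weightMeasure w (Metric.closedBall x r) ≠ ⊤ := by
  have : NeZero (volume.restrict (Metric.closedBall x r)) :=
    ⟨Measure.restrict_eq_zero.not.2 (volume_closedBall_ne_zero x hr)⟩
  obtain ⟨y, hy, hy_top⟩ := ((hw.ae_le x r hr).and (ae_restrict_of_ae hw.ae_ne_top)).exists
  refine ne_top_of_le_ne_top (ENNReal.mul_ne_top ?_ hy_top) hy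
  exact ENNReal.mul_ne_top hw.const_ne_top (volume_closedBall_ne_top x r)

lemma IsA1Weight.measure_closedBall_ne_zero (hw : IsA1Weight w C) (x : ι → ℝ) {r : ℝ}
    (hr : 0 < r) : weightMeasure w (Metric.closedBall x r) ≠ 0 := fun h ↦
  volume_closedBall_ne_zero x hr
    (withDensity_absolutelyContinuous' hw.measurable.aemeasurable hw.ae_ne_zero h)

lemma IsA1Weight.rpow (hw : IsA1Weight w C) {s : ℝ} (hs₀ : 0 ≤ s) (hs₁ : s ≤ 1) :
    IsA1Weight (fun x ↦ w x ^ s) (C ^ s) where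
  measurable := hw.measurable.pow_const s
  ae_ne_zero := by
    filter_upwards [hw.ae_ne_zero, hw.ae_ne_top] with x h₀ h
    exact rpow_ne_zero_of_ne_top h₀ h s
  ae_ne_top := hw.ae_ne_top.mono fun x h ↦ ENNReal.rpow_ne_top_of_nonneg hs₀ h
  const_ne_top := ENNReal.rpow_ne_top_of_nonneg hs₀ hw.const_ne_top
  ae_le x r hr := by
    have hB : MeasurableSet (Metric.closedBall x r) := measurableSet_closedBall
    have holder := ENNReal.lintegral_mul_norm_pow_le
      (μ := volume.restrict (Metric.closedBall x r)) (f := w) (g := fun _ ↦ 1)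
      hw.measurable.aemeasurable aemeasurable_const hs₀ (sub_nonneg.2 hs₁) (add_sub_cancel s 1)
    simp only [ENNReal.one_rpow, mul_one, lintegral_const, Measure.restrict_apply_univ, one_mul]
      at holder
    filter_upwards [hw.ae_le x r hr] with y hy
    rw [withDensity_apply _ hB] at hy ⊢
    set b := volume (Metric.closedBall x r)
    calc ∫⁻ z in Metric.closedBall x r, w z ^ s
        ≤ (∫⁻ z in Metric.closedBall x r, w z) ^ s * b ^ (1 - s) := holder
      _ ≤ (C * b * w y) ^ s * b ^ (1 - s) := by gcongr
      _ = C ^ s * (b ^ s * b ^ (1 - s)) * w y ^ s := by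
        rw [ENNReal.mul_rpow_of_nonneg _ _ hs₀, ENNReal.mul_rpow_of_nonneg _ _ hs₀]
        ring
      _ = C ^ s * b * w y ^ s := by
        rw [← ENNReal.rpow_add _ _ (volume_closedBall_ne_zero x hr) (volume_closedBall_ne_top x r),
          add_sub_cancel, ENNReal.rpow_one]

end Weights

section DyadicBalls

variable [Fintype ι]

/-- The cube of side length `2 ^ (k + 1)` centred at `x`. -/
def dyadicBall (k : ℤ) (x : ι → ℝ) : Set (ι → ℝ) := Metric.closedBall x (2 ^ k)

variable (ι) in
/-- The common volume of the cubes `dyadicBall k x`. -/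
def dyadicVol (k : ℤ) : ℝ≥0∞ := ENNReal.ofReal (2 * 2 ^ k) ^ Fintype.card ι

lemma volume_dyadicBall (k : ℤ) (x : ι → ℝ) : volume (dyadicBall k x) = dyadicVol ι k := by
  rw [dyadicBall, dyadicVol, Real.volume_pi_closedBall _ (by positivity),
    ENNReal.ofReal_pow (by positivity)]

lemma dyadicVol_ne_zero (k : ℤ) : dyadicVol ι k ≠ 0 :=
  pow_ne_zero _ (ENNReal.ofReal_pos.2 (by positivity)).ne'

lemma dyadicVol_ne_top (k : ℤ) : dyadicVol ι k ≠ ⊤ := by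
  rw [dyadicVol]; finiteness

lemma dyadicVol_succ (k : ℤ) : dyadicVol ι (k + 1) = 2 ^ Fintype.card ι * dyadicVol ι k := by
  rw [dyadicVol, dyadicVol, ← mul_pow, ← ENNReal.ofReal_ofNat 2, ← ENNReal.ofReal_mul (by simp),
    zpow_add_one₀ two_ne_zero, mul_comm (2 ^ k : ℝ)]

lemma measurableSet_dyadicBall (k : ℤ) (x : ι → ℝ) : MeasurableSet (dyadicBall k x) :=
  measurableSet_closedBall

lemma mem_dyadicBall_comm {k : ℤ} {x y : ι → ℝ} : y ∈ dyadicBall k x ↔ x ∈ dyadicBall k y :=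
  Metric.mem_closedBall_comm

lemma dyadicBall_subset_succ {k : ℤ} {x y : ι → ℝ} (h : y ∈ dyadicBall k x) :
    dyadicBall k y ⊆ dyadicBall (k + 1) x := by
  refine Metric.closedBall_subset_closedBall' ?_
  rw [zpow_add_one₀ two_ne_zero, mul_two]
  gcongr
  exact h

lemma mem_dyadicBall_self (k : ℤ) (x : ι → ℝ) : x ∈ dyadicBall k x :=
  Metric.mem_closedBall_self (by positivity)

/-- The mean value of `w` over the cube `dyadicBall k x`. -/
def dyadicMean (w : (ι → ℝ) → ℝ≥0∞) (k : ℤ) (x : ι → ℝ) : ℝ≥0∞ :=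
  weightMeasure w (dyadicBall k x) / dyadicVol ι k

lemma dyadicMean_mul_dyadicVol (w : (ι → ℝ) → ℝ≥0∞) (k : ℤ) (x : ι → ℝ) :
    dyadicMean w k x * dyadicVol ι k = weightMeasure w (dyadicBall k x) :=
  ENNReal.div_mul_cancel (dyadicVol_ne_zero k) (dyadicVol_ne_top k)

variable {w : (ι → ℝ) → ℝ≥0∞} {C : ℝ≥0∞}

lemma IsA1Weight.measure_dyadicBall_ne_top (hw : IsA1Weight w C) (k : ℤ) (x : ι → ℝ) :
    weightMeasure w (dyadicBall k x) ≠ ⊤ := hw.measure_closedBall_ne_top x (by positivity)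

lemma IsA1Weight.measure_dyadicBall_ne_zero (hw : IsA1Weight w C) (k : ℤ) (x : ι → ℝ) :
    weightMeasure w (dyadicBall k x) ≠ 0 := hw.measure_closedBall_ne_zero x (by positivity)

lemma IsA1Weight.dyadicMean_ne_top (hw : IsA1Weight w C) (k : ℤ) (x : ι → ℝ) :
    dyadicMean w k x ≠ ⊤ :=
  ENNReal.div_ne_top (hw.measure_dyadicBall_ne_top k x) (dyadicVol_ne_zero k)

lemma IsA1Weight.dyadicMean_ne_zero (hw : IsA1Weight w C) (k : ℤ) (x : ι → ℝ) :
    dyadicMean w k x ≠ 0 :=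
  ENNReal.div_ne_zero.2 ⟨hw.measure_dyadicBall_ne_zero k x, dyadicVol_ne_top k⟩

lemma IsA1Weight.measure_dyadicBall_le_decay_mul [Nonempty ι] (hw : IsA1Weight w C) (k : ℤ)
    (x : ι → ℝ) :
    weightMeasure w (dyadicBall k x) ≤ decay C * weightMeasure w (dyadicBall (k + 1) x) := by
  have hB := measurableSet_dyadicBall (ι := ι)
  refine measure_le_decay_mul (μ := volume) (hB k x)
    (dyadicBall_subset_succ (mem_dyadicBall_self k x)) ?_ ?_ (hw.measure_dyadicBall_ne_top _ _)
    (hw.volume_mul_le (by positivity) ((hB _ _).diff (hB _ _)) sdiff_subset) ?_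
  · rw [volume_dyadicBall]; exact dyadicVol_ne_zero _
  · rw [volume_dyadicBall]; exact dyadicVol_ne_top _
  · rw [volume_dyadicBall, volume_dyadicBall, dyadicVol_succ]
    gcongr
    exact le_self_pow₀ one_le_two Fintype.card_ne_zero

lemma IsA1Weight.measure_dyadicBall_le_of_mem (hw : IsA1Weight w C) {k : ℤ} {x y : ι → ℝ}
    (hy : y ∈ dyadicBall k x) :
    weightMeasure w (dyadicBall k y)
      ≤ C * 2 ^ Fintype.card ι * weightMeasure w (dyadicBall k x) := by
  refine (ENNReal.mul_le_mul_iff_right (dyadicVol_ne_zero (ι := ι) k) (dyadicVol_ne_top k)).1 ?_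
  calc dyadicVol ι k * weightMeasure w (dyadicBall k y)
      ≤ volume (dyadicBall k x) * weightMeasure w (dyadicBall (k + 1) x) := by
        rw [volume_dyadicBall]
        gcongr
        exact dyadicBall_subset_succ hy
    _ ≤ C * volume (dyadicBall (k + 1) x) * weightMeasure w (dyadicBall k x) :=
        hw.volume_mul_le (by positivity) (measurableSet_dyadicBall k x)
          (dyadicBall_subset_succ (mem_dyadicBall_self k x))
    _ = dyadicVol ι k * (C * 2 ^ Fintype.card ι * weightMeasure w (dyadicBall k x)) := by
        rw [volume_dyadicBall, dyadicVol_succ]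
        ring

-- The `A₁` inequality holds at almost every point of one given cube; it is used for the countably
-- many dyadic cubes centred in a dense sequence.
lemma IsA1Weight.ae_dyadicMean_le (hw : IsA1Weight w C) :
    ∀ᵐ x, ∀ k, dyadicMean w k x ≤ C * 2 ^ Fintype.card ι * w x := by
  set z := TopologicalSpace.denseSeq (ι → ℝ)
  have key : ∀ᵐ x, ∀ (k : ℤ) (i : ℕ), x ∈ dyadicBall (k + 1) (z i) →
      weightMeasure w (dyadicBall (k + 1) (z i))
        ≤ C * volume (dyadicBall (k + 1) (z i)) * w x :=
    ae_all_iff.2 fun k ↦ ae_all_iff.2 fun i ↦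
      (ae_restrict_iff' (measurableSet_dyadicBall _ _)).1 (hw.ae_le (z i) _ (by positivity))
  filter_upwards [key] with x hx k
  obtain ⟨i, hi⟩ := (TopologicalSpace.denseRange_denseSeq (ι → ℝ)).exists_dist_lt x
    (show (0 : ℝ) < 2 ^ k by positivity)
  have hsub := dyadicBall_subset_succ (Metric.mem_closedBall.2 hi.le)
  refine ENNReal.div_le_of_le_mul ?_
  calc weightMeasure w (dyadicBall k x)
      ≤ weightMeasure w (dyadicBall (k + 1) (z i)) := measure_mono hsub
    _ ≤ C * volume (dyadicBall (k + 1) (z i)) * w x := hx k i (hsub (mem_dyadicBall_self k x))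
    _ = C * 2 ^ Fintype.card ι * w x * dyadicVol ι k := by
        rw [volume_dyadicBall, dyadicVol_succ]
        ring

end DyadicBalls

section DyadicCells

/-- The index of the dyadic cell of generation `j` containing `x`, in the dyadic grid generated by
the cube with lowest corner `c` and side length `h`. -/
def dyadicIndex (c : ι → ℝ) (h : ℝ) (j : ℕ) (x : ι → ℝ) : ι → ℤ :=
  fun i ↦ ⌊(x i - c i) * 2 ^ j / h⌋

/-- The half-open dyadic cell of generation `j` (side length `h / 2 ^ j`) containing `x`. -/
def dyadicCell (c : ι → ℝ) (h : ℝ) (j : ℕ) (x : ι → ℝ) : Set (ι → ℝ) :=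
  {y | dyadicIndex c h j y = dyadicIndex c h j x}

/-- The centre of `dyadicCell c h j x`. -/
def dyadicCenter (c : ι → ℝ) (h : ℝ) (j : ℕ) (x : ι → ℝ) : ι → ℝ :=
  fun i ↦ c i + (dyadicIndex c h j x i + 1 / 2) * (h / 2 ^ j)

variable {c : ι → ℝ} {h : ℝ} {i j : ℕ} {x y : ι → ℝ}

lemma mem_dyadicCell_self : x ∈ dyadicCell c h j x := rfl

lemma dyadicCell_eq_of_mem (hy : y ∈ dyadicCell c h j x) :
    dyadicCell c h j y = dyadicCell c h j x := by
  have hy : dyadicIndex c h j y = dyadicIndex c h j x := hy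
  rw [dyadicCell, dyadicCell, hy]

lemma dyadicCell_antitone (x : ι → ℝ) : Antitone fun j ↦ dyadicCell c h j x := by
  have half : ∀ j (z : ι → ℝ) i, dyadicIndex c h j z i = dyadicIndex c h (j + 1) z i / (2 : ℕ) := by
    intro j z i
    rw [dyadicIndex, dyadicIndex, ← Int.floor_div_natCast, pow_succ]
    congr 1
    push_cast
    ring
  refine antitone_nat_of_succ_le fun j y hy ↦ funext fun i ↦ ?_
  rw [half j y, half j x, congrFun hy i]

lemma dyadicCell_eq_pi (hh : 0 < h) :
    dyadicCell c h j x = univ.pi fun i ↦ Ico (dyadicCenter c h j x i - h / 2 ^ j / 2)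
      (dyadicCenter c h j x i + h / 2 ^ j / 2) := by
  ext y
  simp only [dyadicCell, mem_ofPred_eq, mem_univ_pi, mem_Ico, funext_iff]
  refine forall_congr' fun i ↦ ?_
  set m := dyadicIndex c h j x i
  have hside : 0 < h / 2 ^ j := by positivity
  have hscale : (y i - c i) * 2 ^ j / h = (y i - c i) / (h / 2 ^ j) := by field_simp
  have hlow : dyadicCenter c h j x i - h / 2 ^ j / 2 = c i + m * (h / 2 ^ j) := by
    rw [dyadicCenter]; ring
  have hhigh : dyadicCenter c h j x i + h / 2 ^ j / 2 = c i + (m + 1) * (h / 2 ^ j) := by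
    rw [dyadicCenter]; ring
  rw [dyadicIndex, Int.floor_eq_iff, hscale, le_div_iff₀ hside, div_lt_iff₀ hside, hlow, hhigh,
    le_sub_iff_add_le', sub_lt_iff_lt_add']

lemma measurableSet_dyadicCell [Finite ι] (hh : 0 < h) : MeasurableSet (dyadicCell c h j x) := by
  rw [dyadicCell_eq_pi hh]
  exact MeasurableSet.univ_pi fun _ ↦ measurableSet_Ico

lemma countable_range_dyadicCell [Finite ι] (c : ι → ℝ) (h : ℝ) :
    (range fun a : ℕ × (ι → ℝ) ↦ dyadicCell c h a.1 a.2).Countable := by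
  refine (countable_range fun a : ℕ × (ι → ℤ) ↦ {y | dyadicIndex c h a.1 y = a.2}).mono ?_
  rintro _ ⟨⟨j, x⟩, rfl⟩
  exact ⟨(j, dyadicIndex c h j x), rfl⟩

variable [Fintype ι]

lemma dyadicCell_subset_closedBall (hh : 0 < h) :
    dyadicCell c h j x ⊆ Metric.closedBall (dyadicCenter c h j x) (h / 2 ^ j / 2) := by
  rw [dyadicCell_eq_pi hh, closedBall_pi _ (by positivity)]
  refine pi_mono fun i _ ↦ ?_
  rw [Real.closedBall_eq_Icc]
  exact Ico_subset_Icc_self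

lemma dyadicCell_ae_eq_closedBall (hh : 0 < h) :
    dyadicCell c h j x =ᵐ[volume] Metric.closedBall (dyadicCenter c h j x) (h / 2 ^ j / 2) := by
  rw [dyadicCell_eq_pi hh, closedBall_pi _ (by positivity)]
  simp only [Real.closedBall_eq_Icc, pi_univ_Icc]
  exact Measure.univ_pi_Ico_ae_eq_Icc

lemma dyadicCell_zero_ae_eq_closedBall (x : ι → ℝ) {r : ℝ} (hr : 0 < r) :
    dyadicCell (fun i ↦ x i - r) (2 * r) 0 x =ᵐ[volume] Metric.closedBall x r := by
  have hcenter : dyadicCenter (fun i ↦ x i - r) (2 * r) 0 x = x := by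
    funext i
    have hindex : ⌊r * 1 / (2 * r)⌋ = 0 := by
      rw [mul_one, div_mul_cancel_right₀ hr.ne']
      norm_num
    rw [dyadicCenter, dyadicIndex, sub_sub_self, pow_zero, hindex]
    push_cast
    ring
  have hae := dyadicCell_ae_eq_closedBall (c := fun i ↦ x i - r) (j := 0) (x := x)
    (mul_pos two_pos hr)
  rwa [hcenter, pow_zero, div_one, mul_div_cancel_left₀ _ two_ne_zero] at hae

lemma dist_le_of_mem_dyadicCell (hh : 0 < h) (hy : y ∈ dyadicCell c h j x) :
    dist y x ≤ h / 2 ^ j :=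
  calc dist y x ≤ dist y (dyadicCenter c h j x) + dist x (dyadicCenter c h j x) :=
        dist_triangle_right _ _ _
    _ ≤ h / 2 ^ j / 2 + h / 2 ^ j / 2 :=
        add_le_add (dyadicCell_subset_closedBall hh hy)
          (dyadicCell_subset_closedBall hh mem_dyadicCell_self)
    _ = h / 2 ^ j := add_halves _

lemma volume_dyadicCell (hh : 0 < h) :
    volume (dyadicCell c h j x) = ENNReal.ofReal (h / 2 ^ j) ^ Fintype.card ι := by
  rw [measure_congr (dyadicCell_ae_eq_closedBall hh), Real.volume_pi_closedBall _ (by positivity),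
    mul_div_cancel₀ _ two_ne_zero, ENNReal.ofReal_pow (by positivity)]

lemma volume_dyadicCell_ne_zero (hh : 0 < h) : volume (dyadicCell c h j x) ≠ 0 := by
  rw [volume_dyadicCell hh]
  exact pow_ne_zero _ (ENNReal.ofReal_pos.2 (by positivity)).ne'

lemma volume_dyadicCell_ne_top (hh : 0 < h) : volume (dyadicCell c h j x) ≠ ⊤ := by
  rw [volume_dyadicCell hh]; finiteness

lemma volume_dyadicCell_eq_mul_succ (hh : 0 < h) :
    volume (dyadicCell c h j x)
      = 2 ^ Fintype.card ι * volume (dyadicCell c h (j + 1) x) := by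
  rw [volume_dyadicCell hh, volume_dyadicCell hh, ← mul_pow, ← ENNReal.ofReal_ofNat 2,
    ← ENNReal.ofReal_mul (by simp), pow_succ]
  congr 2
  field_simp

variable {w : (ι → ℝ) → ℝ≥0∞} {C : ℝ≥0∞}

lemma IsA1Weight.measure_dyadicCell_ne_top (hw : IsA1Weight w C) (hh : 0 < h) :
    weightMeasure w (dyadicCell c h j x) ≠ ⊤ :=
  measure_ne_top_of_subset (dyadicCell_subset_closedBall hh)
    (hw.measure_closedBall_ne_top _ (by positivity))

lemma IsA1Weight.volume_mul_dyadicCell_le (hw : IsA1Weight w C) (hh : 0 < h) {E : Set (ι → ℝ)}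
    (hE : MeasurableSet E) (hEQ : E ⊆ dyadicCell c h j x) :
    volume E * weightMeasure w (dyadicCell c h j x)
      ≤ C * volume (dyadicCell c h j x) * weightMeasure w E := by
  have hae := dyadicCell_ae_eq_closedBall (c := c) (j := j) (x := x) hh
  rw [measure_congr hae, measure_congr ((withDensity_absolutelyContinuous _ _).ae_eq hae)]
  exact hw.volume_mul_le (by positivity) hE (hEQ.trans (dyadicCell_subset_closedBall hh))

end DyadicCells

section StoppingCells

lemma exists_dyadicCell_subset [Finite ι] {c : ι → ℝ} {h : ℝ} (hh : 0 < h)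
    {O : Set (ι → ℝ)} (hO : IsOpen O) {y : ι → ℝ} (hy : y ∈ O) (i : ℕ) :
    ∃ j ≥ i, dyadicCell c h j y ⊆ O := by
  cases nonempty_fintype ι
  obtain ⟨ε, hε, hball⟩ := Metric.isOpen_iff.1 hO y hy
  obtain ⟨j, hj⟩ := pow_unbounded_of_one_lt (h / ε) one_lt_two
  have hlt : h / 2 ^ j < ε := (div_lt_comm₀ hε (by positivity)).1 hj
  have hsub : dyadicCell c h j y ⊆ O := fun z hz ↦
    hball (Metric.mem_ball.2 ((dist_le_of_mem_dyadicCell hh hz).trans_lt hlt))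
  exact ⟨max i j, le_max_left i j, (dyadicCell_antitone y (le_max_right i j)).trans hsub⟩

variable [Fintype ι]

/-- The maximal dyadic subcells of `dyadicCell c h i x` in which the set `O` has density greater
than `τ` (Calderón–Zygmund stopping cells). -/
def stoppingCells (c : ι → ℝ) (h : ℝ) (O : Set (ι → ℝ)) (τ : ℝ≥0∞) (i : ℕ) (x : ι → ℝ) :
    Set (Set (ι → ℝ)) :=
  {s | ∃ j ≥ i, ∃ y ∈ dyadicCell c h i x, s = dyadicCell c h j y ∧
    τ * volume s < volume (O ∩ s) ∧
    ∀ k ≥ i, k < j → volume (O ∩ dyadicCell c h k y) ≤ τ * volume (dyadicCell c h k y)}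

variable {c : ι → ℝ} {h : ℝ} {O : Set (ι → ℝ)} {τ : ℝ≥0∞} {i : ℕ} {x : ι → ℝ}

lemma countable_stoppingCells : (stoppingCells c h O τ i x).Countable := by
  refine (countable_range_dyadicCell c h).mono ?_
  rintro _ ⟨j, -, y, -, rfl, -⟩
  exact ⟨(j, y), rfl⟩

lemma measurableSet_of_mem_stoppingCells (hh : 0 < h) {s : Set (ι → ℝ)}
    (hs : s ∈ stoppingCells c h O τ i x) : MeasurableSet s := by
  obtain ⟨j, -, y, -, rfl, -⟩ := hs
  exact measurableSet_dyadicCell hh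

lemma subset_of_mem_stoppingCells {s : Set (ι → ℝ)} (hs : s ∈ stoppingCells c h O τ i x) :
    s ⊆ dyadicCell c h i x := by
  obtain ⟨j, hj, y, hy, rfl, -⟩ := hs
  exact (dyadicCell_antitone y hj).trans_eq (dyadicCell_eq_of_mem hy)

lemma pairwiseDisjoint_stoppingCells : (stoppingCells c h O τ i x).PairwiseDisjoint id := by
  rintro _ ⟨j, hj, y, -, rfl, hdense, hmin⟩ _ ⟨j', hj', y', -, rfl, hdense', hmin'⟩ hne
  refine disjoint_left.2 fun z hz hz' ↦ hne ?_
  rw [← dyadicCell_eq_of_mem hz] at hdense ⊢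
  rw [← dyadicCell_eq_of_mem hz'] at hdense' ⊢
  obtain hlt | rfl | hlt := lt_trichotomy j j'
  · have := hmin' j hj hlt
    rw [← dyadicCell_eq_of_mem (dyadicCell_antitone y' hlt.le hz')] at this
    exact absurd hdense this.not_gt
  · rfl
  · have := hmin j' hj' hlt
    rw [← dyadicCell_eq_of_mem (dyadicCell_antitone y hlt.le hz)] at this
    exact absurd hdense' this.not_gt

lemma inter_subset_biUnion_stoppingCells (hh : 0 < h) (hO : IsOpen O) (hτ : τ < 1) :
    O ∩ dyadicCell c h i x ⊆ ⋃ s ∈ stoppingCells c h O τ i x, O ∩ s := by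
  classical
  rintro y ⟨hyO, hy⟩
  have hex : ∃ j ≥ i, τ * volume (dyadicCell c h j y) < volume (O ∩ dyadicCell c h j y) := by
    obtain ⟨j, hij, hj⟩ := exists_dyadicCell_subset (c := c) hh hO hyO i
    refine ⟨j, hij, ?_⟩
    rw [inter_eq_self_of_subset_right hj]
    simpa only [one_mul] using (ENNReal.mul_lt_mul_iff_left (volume_dyadicCell_ne_zero hh)
      (volume_dyadicCell_ne_top hh)).2 hτ
  obtain ⟨hj, hdense⟩ := Nat.find_spec hex
  exact mem_iUnion₂.2 ⟨dyadicCell c h (Nat.find hex) y,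
    ⟨_, hj, y, hy, rfl, hdense, fun k hk hlt ↦
      not_lt.1 fun hk' ↦ Nat.find_min hex hlt ⟨hk, hk'⟩⟩, hyO, mem_dyadicCell_self⟩

-- The dyadic parent of a stopping cell is not dense and has `2 ^ n` times its volume.
lemma volume_inter_le_of_mem_stoppingCells (hh : 0 < h)
    (hQ : volume (O ∩ dyadicCell c h i x) ≤ τ * volume (dyadicCell c h i x)) {s : Set (ι → ℝ)}
    (hs : s ∈ stoppingCells c h O τ i x) :
    volume (O ∩ s) ≤ τ * 2 ^ Fintype.card ι * volume s := by
  obtain ⟨j, hj, y, hy, rfl, hdense, hmin⟩ := hs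
  have hne : j ≠ i := by
    rintro rfl
    rw [dyadicCell_eq_of_mem hy] at hdense
    exact hQ.not_gt hdense
  obtain ⟨k, rfl⟩ := Nat.exists_eq_succ_of_ne_zero (Nat.ne_zero_of_lt (lt_of_le_of_ne' hj hne))
  calc volume (O ∩ dyadicCell c h (k + 1) y)
      ≤ volume (O ∩ dyadicCell c h k y) :=
        measure_mono (inter_subset_inter_right _ (dyadicCell_antitone y k.le_succ))
    _ ≤ τ * volume (dyadicCell c h k y) := hmin k (by omega) (by omega)
    _ = τ * 2 ^ Fintype.card ι * volume (dyadicCell c h (k + 1) y) := by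
        rw [volume_dyadicCell_eq_mul_succ hh, mul_assoc]

lemma mul_volume_biUnion_stoppingCells_le (hh : 0 < h) (hO : MeasurableSet O) :
    τ * volume (⋃ s ∈ stoppingCells c h O τ i x, s) ≤ volume (O ∩ dyadicCell c h i x) := by
  set S := stoppingCells c h O τ i x
  have hm : ∀ s ∈ S, MeasurableSet s := fun s ↦ measurableSet_of_mem_stoppingCells hh
  calc τ * volume (⋃ s ∈ S, s)
      = ∑' s : S, τ * volume (s : Set (ι → ℝ)) := by
        rw [ENNReal.tsum_mul_left, ← measure_biUnion (f := fun s ↦ s) countable_stoppingCells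
          pairwiseDisjoint_stoppingCells hm]
    _ ≤ ∑' s : S, volume (O ∩ (s : Set (ι → ℝ))) := by
        refine ENNReal.tsum_le_tsum fun ⟨s, hs⟩ ↦ ?_
        obtain ⟨-, -, -, -, -, hdense, -⟩ := hs
        exact hdense.le
    _ = volume (⋃ s ∈ S, O ∩ s) :=
        (measure_biUnion countable_stoppingCells
          (pairwiseDisjoint_stoppingCells.mono fun s ↦ inter_subset_right)
          fun s hs ↦ hO.inter (hm s hs)).symm
    _ ≤ volume (O ∩ dyadicCell c h i x) :=
        measure_mono (iUnion₂_subset fun s hs ↦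
          inter_subset_inter_right _ (subset_of_mem_stoppingCells hs))

lemma measure_inter_le_mul_measure_biUnion_stoppingCells (hh : 0 < h) (hO : IsOpen O) (hτ : τ < 1)
    {ν : Measure (ι → ℝ)} {θ : ℝ≥0∞}
    (hθ : ∀ s ∈ stoppingCells c h O τ i x, ν (O ∩ s) ≤ θ * ν s) :
    ν (O ∩ dyadicCell c h i x) ≤ θ * ν (⋃ s ∈ stoppingCells c h O τ i x, s) := by
  set S := stoppingCells c h O τ i x
  calc ν (O ∩ dyadicCell c h i x)
      ≤ ∑' s : S, ν (O ∩ s) :=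
        (measure_mono (inter_subset_biUnion_stoppingCells hh hO hτ)).trans
          (measure_biUnion_le _ countable_stoppingCells _)
    _ ≤ ∑' s : S, θ * ν s := ENNReal.tsum_le_tsum fun s ↦ hθ s s.2
    _ = θ * ν (⋃ s ∈ S, s) := by
        rw [ENNReal.tsum_mul_left, ← measure_biUnion (f := fun s ↦ s) countable_stoppingCells
          pairwiseDisjoint_stoppingCells fun s ↦ measurableSet_of_mem_stoppingCells hh]

end StoppingCells

section AInfinity

variable [Fintype ι] {w : (ι → ℝ) → ℝ≥0∞} {C : ℝ≥0∞}

lemma IsA1Weight.measure_biUnion_stoppingCells_le (hw : IsA1Weight w C) {c : ι → ℝ} {h : ℝ}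
    (hh : 0 < h) {O : Set (ι → ℝ)} (hO : MeasurableSet O) {τ : ℝ≥0∞} (hτ₀ : τ ≠ 0) (hτ : τ ≠ ⊤)
    {i : ℕ} {x : ι → ℝ}
    (hQ : volume (O ∩ dyadicCell c h i x) ≤ τ * 2⁻¹ * volume (dyadicCell c h i x)) :
    weightMeasure w (⋃ s ∈ stoppingCells c h O τ i x, s)
      ≤ decay C * weightMeasure w (dyadicCell c h i x) := by
  set Q := dyadicCell c h i x
  set F := ⋃ s ∈ stoppingCells c h O τ i x, s
  have hF : MeasurableSet F := MeasurableSet.biUnion countable_stoppingCells fun s ↦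
    measurableSet_of_mem_stoppingCells hh
  refine measure_le_decay_mul (μ := volume) hF (iUnion₂_subset fun s ↦ subset_of_mem_stoppingCells)
    (volume_dyadicCell_ne_zero hh) (volume_dyadicCell_ne_top hh) (hw.measure_dyadicCell_ne_top hh)
    (hw.volume_mul_dyadicCell_le hh ((measurableSet_dyadicCell hh).diff hF) sdiff_subset) ?_
  refine (ENNReal.mul_le_mul_iff_right hτ₀ hτ).1 ?_
  calc τ * (2 * volume F) = 2 * (τ * volume F) := by ring
    _ ≤ 2 * (τ * 2⁻¹ * volume Q) := by
        gcongr 2 * ?_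
        exact (mul_volume_biUnion_stoppingCells_le hh hO).trans hQ
    _ = (2 * 2⁻¹) * (τ * volume Q) := by ring
    _ = τ * volume Q := by rw [ENNReal.mul_inv_cancel two_ne_zero ENNReal.ofNat_ne_top, one_mul]

variable [Nonempty ι]

lemma IsA1Weight.measure_inter_dyadicCell_le (hw : IsA1Weight w C) {c : ι → ℝ} {h : ℝ}
    (hh : 0 < h) {O : Set (ι → ℝ)} (hO : IsOpen O) (j i : ℕ) (x : ι → ℝ)
    (hQ : volume (O ∩ dyadicCell c h i x)
      ≤ (2 ^ (Fintype.card ι + 1))⁻¹ ^ j * volume (dyadicCell c h i x)) :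
    weightMeasure w (O ∩ dyadicCell c h i x)
      ≤ decay C ^ j * weightMeasure w (dyadicCell c h i x) := by
  induction j generalizing i x with
  | zero => simpa using measure_mono inter_subset_right
  | succ j ih =>
    set n := Fintype.card ι
    set η : ℝ≥0∞ := (2 ^ (n + 1))⁻¹
    set τ : ℝ≥0∞ := η ^ j * (2 ^ n)⁻¹
    have hη : η ≤ 1 := ENNReal.inv_le_one.2 (one_le_pow₀ one_le_two)
    have hτ₀ : τ ≠ 0 := mul_ne_zero (pow_ne_zero _ (by simp [η])) (by simp)
    have hτ : τ < 1 := (mul_le_of_le_one_left' (pow_le_one' hη j)).trans_lt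
      (ENNReal.inv_lt_one.2 (one_lt_pow₀ one_lt_two Fintype.card_ne_zero))
    have hτη : τ * 2⁻¹ = η ^ (j + 1) := by
      rw [pow_succ, mul_assoc, ← ENNReal.mul_inv (by simp) (by simp), ← pow_succ]
    have hτn : τ * 2 ^ n = η ^ j := by
      rw [mul_assoc, ENNReal.inv_mul_cancel (by simp) (by simp), mul_one]
    have hQτ : volume (O ∩ dyadicCell c h i x) ≤ τ * volume (dyadicCell c h i x) :=
      (hQ.trans_eq (by rw [hτη])).trans
        (mul_le_mul_left (mul_le_of_le_one_right' (by simp)) _)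
    calc weightMeasure w (O ∩ dyadicCell c h i x)
        ≤ decay C ^ j * weightMeasure w (⋃ s ∈ stoppingCells c h O τ i x, s) := by
          refine measure_inter_le_mul_measure_biUnion_stoppingCells hh hO hτ fun s hs ↦ ?_
          have hdensity := volume_inter_le_of_mem_stoppingCells hh hQτ hs
          obtain ⟨k, -, y, -, rfl, -⟩ := hs
          exact ih k y (hτn ▸ hdensity)
      _ ≤ decay C ^ j * (decay C * weightMeasure w (dyadicCell c h i x)) := by
          gcongr
          exact hw.measure_biUnion_stoppingCells_le hh hO.measurableSet hτ₀ hτ.ne_top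
            (hQ.trans_eq (by rw [hτη]))
      _ = decay C ^ (j + 1) * weightMeasure w (dyadicCell c h i x) := by
          rw [pow_succ, mul_assoc]

lemma IsA1Weight.measure_inter_closedBall_le (hw : IsA1Weight w C) (x : ι → ℝ) {r : ℝ}
    (hr : 0 < r) (E : Set (ι → ℝ)) (j : ℕ)
    (hE : volume (E ∩ Metric.closedBall x r)
      < (2 ^ (Fintype.card ι + 1))⁻¹ ^ j * volume (Metric.closedBall x r)) :
    weightMeasure w (E ∩ Metric.closedBall x r)
      ≤ decay C ^ j * weightMeasure w (Metric.closedBall x r) := by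
  obtain ⟨O, hEO, hO, hOlt⟩ := exists_isOpen_lt_of_lt _ _ hE
  have hQ := dyadicCell_zero_ae_eq_closedBall x hr
  set Q := dyadicCell (fun i ↦ x i - r) (2 * r) 0 x
  have hQw := (withDensity_absolutelyContinuous volume w).ae_eq hQ
  calc weightMeasure w (E ∩ Metric.closedBall x r)
      ≤ weightMeasure w (O ∩ Q) := by
        rw [measure_congr ((Filter.EventuallyEq.refl _ O).inter hQw)]
        exact measure_mono fun y hy ↦ ⟨hEO hy, hy.2⟩
    _ ≤ decay C ^ j * weightMeasure w Q := by
        refine hw.measure_inter_dyadicCell_le (by positivity) hO j 0 x ?_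
        rw [measure_congr hQ]
        exact (measure_mono inter_subset_left).trans hOlt.le
    _ = decay C ^ j * weightMeasure w (Metric.closedBall x r) := by rw [measure_congr hQw]

end AInfinity

section ReverseHolder

lemma exists_rpow_mul_lt_one {L θ : ℝ≥0∞} (hL₀ : L ≠ 0) (hL : L ≠ ⊤) (hθ : θ < 1) {b : ℝ}
    (hb : 0 < b) : ∃ γ ∈ Ioo 0 b, L ^ γ * θ < 1 := by
  lift L to NNReal using hL
  lift θ to NNReal using hθ.ne_top
  have hL₀' : L ≠ 0 := by simpa using hL₀
  have hlim : Filter.Tendsto (fun γ : ℝ ↦ L ^ γ * θ) (nhds 0) (nhds (L ^ (0 : ℝ) * θ)) :=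
    (tendsto_const_nhds.nnrpow Filter.tendsto_id (Or.inl hL₀')).mul_const θ
  rw [NNReal.rpow_zero, one_mul] at hlim
  have hsmall := (hlim.eventually_lt_const (by exact_mod_cast hθ)).filter_mono
    (nhdsWithin_le_nhds (s := Ioi 0))
  obtain ⟨γ, hγ, hγb⟩ := (hsmall.and (Ioo_mem_nhdsGT hb)).exists
  exact ⟨γ, hγb, by rw [← ENNReal.coe_rpow_of_ne_zero hL₀']; exact_mod_cast hγ⟩

lemma rpow_le_add_tsum_indicator {L : ℝ≥0∞} (hL₁ : 1 < L) (hL : L ≠ ⊤) {γ : ℝ} (hγ : 0 < γ)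
    (z : ℝ≥0∞) :
    z ^ γ
      ≤ L ^ γ + ∑' j : ℕ, {j : ℕ | L ^ (j + 1) < z}.indicator (fun j ↦ (L ^ γ) ^ (j + 2)) j := by
  rcases le_or_gt z L with hz | hz
  · exact (ENNReal.rpow_le_rpow hz hγ.le).trans le_self_add
  refine le_add_left ?_
  rcases eq_or_ne z ⊤ with rfl | hz'
  · have hterm (j : ℕ) : (1 : ℝ≥0∞)
        ≤ {j : ℕ | L ^ (j + 1) < ⊤}.indicator (fun j ↦ (L ^ γ) ^ (j + 2)) j := by
      rw [indicator_of_mem (show j ∈ {j : ℕ | L ^ (j + 1) < ⊤} from ENNReal.pow_lt_top hL.lt_top)]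
      exact one_le_pow₀ (ENNReal.one_le_rpow hL₁.le hγ)
    exact le_top.trans ((ENNReal.tsum_const_eq_top_of_ne_zero one_ne_zero).ge.trans
      (ENNReal.tsum_le_tsum hterm))
  obtain ⟨m, hm, hm'⟩ := ENNReal.exists_mem_Ioc_zpow (zero_le.trans_lt hz).ne' hz' hL₁ hL
  have hm₀ : 0 < m := by
    by_contra! hle
    refine (hz.trans_le hm').not_ge ((ENNReal.zpow_le_of_le hL₁.le ?_).trans_eq (zpow_one L))
    lia
  obtain ⟨j, rfl⟩ : ∃ j : ℕ, m = (j + 1 : ℕ) := ⟨(m - 1).toNat, by lia⟩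
  refine le_trans ?_ (ENNReal.le_tsum j)
  rw [indicator_of_mem (by exact_mod_cast hm), ← ENNReal.rpow_natCast, ← ENNReal.rpow_mul,
    mul_comm γ, ENNReal.rpow_mul, ENNReal.rpow_natCast]
  exact ENNReal.rpow_le_rpow (by exact_mod_cast hm') hγ.le

variable {X : Type*} [MeasurableSpace X] {μ ν : Measure X} {g : X → ℝ≥0∞}

lemma lintegral_rpow_le_add_tsum_measure {L : ℝ≥0∞} (hL₁ : 1 < L) (hL : L ≠ ⊤) {γ : ℝ}
    (hγ : 0 < γ) (hg : Measurable g) :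
    ∫⁻ x, g x ^ γ ∂ν
      ≤ L ^ γ * ν univ + ∑' j : ℕ, (L ^ γ) ^ (j + 2) * ν {x | L ^ (j + 1) < g x} := by
  have hmeas (j : ℕ) : MeasurableSet {x | L ^ (j + 1) < g x} :=
    measurableSet_lt measurable_const hg
  calc ∫⁻ x, g x ^ γ ∂ν
      ≤ ∫⁻ x, L ^ γ + ∑' j : ℕ, {x | L ^ (j + 1) < g x}.indicator
          (fun _ ↦ (L ^ γ) ^ (j + 2)) x ∂ν :=
        lintegral_mono fun x ↦ rpow_le_add_tsum_indicator hL₁ hL hγ (g x)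
    _ = L ^ γ * ν univ + ∑' j : ℕ, (L ^ γ) ^ (j + 2) * ν {x | L ^ (j + 1) < g x} := by
        rw [lintegral_add_left measurable_const, lintegral_const,
          lintegral_tsum fun j ↦ (measurable_const.indicator (hmeas j)).aemeasurable]
        simp_rw [lintegral_indicator_const (hmeas _)]

lemma lintegral_rpow_le_of_measure_decay {η θ : ℝ≥0∞} (hη₀ : η ≠ 0) (hη : η < 1)
    (hμ₀ : μ univ ≠ 0) (hμ : μ univ ≠ ⊤)
    (hdecay : ∀ E, ∀ j : ℕ, μ E < η ^ j * μ univ → ν E ≤ θ ^ j * ν univ)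
    {γ : ℝ} (hγ : 0 < γ) (hg : Measurable g) (hgμ : ∫⁻ x, g x ∂μ ≤ μ univ) :
    ∫⁻ x, g x ^ γ ∂ν
      ≤ (η⁻¹ ^ γ + (η⁻¹ ^ γ) ^ 2 * (1 - η⁻¹ ^ γ * θ)⁻¹) * ν univ := by
  set L := η⁻¹
  have hL₁ : 1 < L := ENNReal.one_lt_inv.2 hη
  have hL : L ≠ ⊤ := ENNReal.inv_ne_top.2 hη₀
  have hlevel (j : ℕ) : ν {x | L ^ (j + 1) < g x} ≤ θ ^ j * ν univ := by
    refine hdecay _ j ?_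
    calc μ {x | L ^ (j + 1) < g x} ≤ μ {x | L ^ (j + 1) ≤ g x} :=
          measure_mono (ofPred_subset_ofPred.2 fun _ ↦ le_of_lt)
      _ ≤ (∫⁻ x, g x ∂μ) / L ^ (j + 1) :=
          meas_ge_le_lintegral_div hg.aemeasurable (pow_ne_zero _ (zero_lt_one.trans hL₁).ne')
            (by finiteness)
      _ ≤ μ univ / L ^ (j + 1) := by gcongr
      _ = η ^ j * (η * μ univ) := by
          rw [div_eq_mul_inv, ENNReal.inv_pow, inv_inv, pow_succ]; ring
      _ < η ^ j * μ univ := by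
          refine ENNReal.mul_lt_mul_right (pow_ne_zero _ hη₀) (by finiteness) ?_
          simpa using ENNReal.mul_lt_mul_left hμ₀ hμ hη
  calc ∫⁻ x, g x ^ γ ∂ν
      ≤ L ^ γ * ν univ + ∑' j : ℕ, (L ^ γ) ^ (j + 2) * ν {x | L ^ (j + 1) < g x} :=
        lintegral_rpow_le_add_tsum_measure hL₁ hL hγ hg
    _ ≤ L ^ γ * ν univ + ∑' j : ℕ, (L ^ γ) ^ (j + 2) * (θ ^ j * ν univ) := by
        gcongr with j
        exact hlevel j
    _ = L ^ γ * ν univ + ∑' j : ℕ, (L ^ γ) ^ 2 * ν univ * (L ^ γ * θ) ^ j := by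
        congr 2 with j
        rw [mul_pow]
        ring
    _ = (L ^ γ + (L ^ γ) ^ 2 * (1 - L ^ γ * θ)⁻¹) * ν univ := by
        rw [ENNReal.tsum_mul_left, ENNReal.tsum_geometric]
        ring

variable [Fintype ι] [Nonempty ι]

lemma IsA1Weight.exists_lintegral_rpow_le {u : (ι → ℝ) → ℝ≥0∞} {C : ℝ≥0∞} (hu : IsA1Weight u C)
    {b : ℝ} (hb : 0 < b) :
    ∃ γ ∈ Ioo 0 b, ∃ K : ℝ≥0∞, K ≠ ⊤ ∧ ∀ V : (ι → ℝ) → ℝ≥0∞, Measurable V → ∀ k x,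
      dyadicMean V k x ≠ 0 → dyadicMean V k x ≠ ⊤ →
      ∫⁻ y in dyadicBall k x, V y ^ γ ∂weightMeasure u
        ≤ K * dyadicMean V k x ^ γ * weightMeasure u (dyadicBall k x) := by
  set η : ℝ≥0∞ := (2 ^ (Fintype.card ι + 1))⁻¹
  have hη : η < 1 := ENNReal.inv_lt_one.2 (one_lt_pow₀ one_lt_two (Nat.succ_ne_zero _))
  have hη₀ : η ≠ 0 := by simp [η]
  obtain ⟨γ, hγ, hγθ⟩ := exists_rpow_mul_lt_one (ENNReal.inv_ne_zero.2 hη.ne_top)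
    (ENNReal.inv_ne_top.2 hη₀) (decay_lt_one hu.const_ne_top) hb
  have hηγ : η⁻¹ ^ γ ≠ ⊤ := ENNReal.rpow_ne_top_of_nonneg hγ.1.le (ENNReal.inv_ne_top.2 hη₀)
  refine ⟨γ, hγ, η⁻¹ ^ γ + (η⁻¹ ^ γ) ^ 2 * (1 - η⁻¹ ^ γ * decay C)⁻¹, ?_, fun V hV k x ha₀ ha ↦ ?_⟩
  · have := ENNReal.inv_ne_top.2 (tsub_pos_of_lt hγθ).ne'
    finiteness
  set B := dyadicBall k x
  set a := dyadicMean V k x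
  have hmean : ∫⁻ y in B, V y / a ≤ volume.restrict B univ := by
    simp_rw [div_eq_mul_inv]
    rw [lintegral_mul_const _ hV, ← withDensity_apply _ (measurableSet_dyadicBall k x),
      ← dyadicMean_mul_dyadicVol, Measure.restrict_apply_univ, volume_dyadicBall,
      mul_right_comm, ENNReal.mul_inv_cancel ha₀ ha, one_mul]
  have hpow := lintegral_rpow_le_of_measure_decay (ν := (weightMeasure u).restrict B) hη₀ hη
    (by rw [Measure.restrict_apply_univ, volume_dyadicBall]; exact dyadicVol_ne_zero k)
    (by rw [Measure.restrict_apply_univ, volume_dyadicBall]; exact dyadicVol_ne_top k)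
    (fun E j hE ↦ by
      rw [Measure.restrict_apply' (measurableSet_dyadicBall k x),
        Measure.restrict_apply_univ] at hE ⊢
      exact hu.measure_inter_closedBall_le x (by positivity) E j hE)
    hγ.1 (hV.div_const a) hmean
  calc ∫⁻ y in B, V y ^ γ ∂weightMeasure u
      = a ^ γ * ∫⁻ y in B, (V y / a) ^ γ ∂weightMeasure u := by
        rw [← lintegral_const_mul _ ((hV.div_const a).pow_const γ)]
        simp_rw [← ENNReal.mul_rpow_of_nonneg _ _ hγ.1.le, ENNReal.mul_div_cancel ha₀ ha]
    _ ≤ a ^ γ * ((η⁻¹ ^ γ + (η⁻¹ ^ γ) ^ 2 * (1 - η⁻¹ ^ γ * decay C)⁻¹)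
          * (weightMeasure u).restrict B univ) := by gcongr
    _ = (η⁻¹ ^ γ + (η⁻¹ ^ γ) ^ 2 * (1 - η⁻¹ ^ γ * decay C)⁻¹) * a ^ γ * weightMeasure u B := by
        rw [Measure.restrict_apply_univ]; ring

end ReverseHolder

section LocalScale

variable [Fintype ι]

lemma measurableSet_mem_dyadicBall (k : ℤ) :
    MeasurableSet {z : (ι → ℝ) × (ι → ℝ) | z.2 ∈ dyadicBall k z.1} :=
  measurableSet_le (measurable_snd.dist measurable_fst) measurable_const

lemma measurable_measure_dyadicBall (ν : Measure (ι → ℝ)) [SFinite ν] (k : ℤ) :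
    Measurable fun x ↦ ν (dyadicBall k x) :=
  measurable_measure_prodMk_left (measurableSet_mem_dyadicBall k)

lemma lintegral_measure_dyadicBall_comm (μ ν : Measure (ι → ℝ)) [SFinite μ] [SFinite ν] (k : ℤ) :
    ∫⁻ x, ν (dyadicBall k x) ∂μ = ∫⁻ y, μ (dyadicBall k y) ∂ν := by
  have hE := measurableSet_mem_dyadicBall (ι := ι) k
  calc ∫⁻ x, ν (dyadicBall k x) ∂μ
      = ∫⁻ y, μ {x | y ∈ dyadicBall k x} ∂ν :=
        (Measure.prod_apply hE).symm.trans (Measure.prod_apply_symm hE)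
    _ = ∫⁻ y, μ (dyadicBall k y) ∂ν := by simp_rw [mem_dyadicBall_comm, ofPred_mem_eq]

/-- The product `V(x) u(B)` for the cube `B` of generation `k` centred at `x`. It grows
geometrically in `k`, and its size separates the near scales from the far ones. -/
def localScale (u V : (ι → ℝ) → ℝ≥0∞) (k : ℤ) (x : ι → ℝ) : ℝ≥0∞ :=
  V x * weightMeasure u (dyadicBall k x)

/-- The fractional mean `ν(B) / (V(x) |B|)^s` of `ν` over the cube `B` of generation `k` centred
at `x`, relative to the weight `V`. -/
def fracDensity (s : ℝ) (V : (ι → ℝ) → ℝ≥0∞) (ν : Measure (ι → ℝ)) (k : ℤ) (x : ι → ℝ) : ℝ≥0∞ :=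
  ν (dyadicBall k x) / (V x * dyadicVol ι k) ^ s

/-- The points of local scale at most `ρ` at which `fracDensity` exceeds the power of the local
scale that would make the sum over all near scales at most a constant times `l`. -/
def exceptionalSet (s γ : ℝ) (u V : (ι → ℝ) → ℝ≥0∞) (ν : Measure (ι → ℝ)) (ρ l : ℝ≥0∞) (k : ℤ) :
    Set (ι → ℝ) :=
  {x | localScale u V k x ≤ ρ ∧ l * (localScale u V k x / ρ) ^ (1 - s - γ) < fracDensity s V ν k x}

/-- The density obtained from `uV` by Chebyshev's inequality on `exceptionalSet`; integrated over
the cubes centred at `y`, it is the kernel against which `ν` is tested. -/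
def dualDensity (s γ : ℝ) (u V : (ι → ℝ) → ℝ≥0∞) (ρ : ℝ≥0∞) (k : ℤ) : (ι → ℝ) → ℝ≥0∞ :=
  {x | localScale u V k x ≤ ρ}.indicator fun x ↦
    u x * V x ^ γ * (weightMeasure u (dyadicBall k x) ^ (1 - s - γ) * dyadicVol ι k ^ s)⁻¹

variable {u V : (ι → ℝ) → ℝ≥0∞} {C CV : ℝ≥0∞}

lemma measurable_localScale (u : (ι → ℝ) → ℝ≥0∞) (hV : Measurable V) (k : ℤ) :
    Measurable (localScale u V k) :=
  hV.mul (measurable_measure_dyadicBall (weightMeasure u) k)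

lemma measurable_fracDensity (s : ℝ) (hV : Measurable V) (ν : Measure (ι → ℝ)) [SFinite ν]
    (k : ℤ) : Measurable (fracDensity s V ν k) :=
  (measurable_measure_dyadicBall ν k).div ((hV.mul_const _).pow_const s)

lemma measurableSet_exceptionalSet (s γ : ℝ) (u : (ι → ℝ) → ℝ≥0∞) (hV : Measurable V)
    (ν : Measure (ι → ℝ)) [SFinite ν] (ρ l : ℝ≥0∞) (k : ℤ) :
    MeasurableSet (exceptionalSet s γ u V ν ρ l k) :=
  (measurableSet_le (measurable_localScale u hV k) measurable_const).inter
    (measurableSet_lt ((((measurable_localScale u hV k).div_const ρ).pow_const _).const_mul l)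
      (measurable_fracDensity s hV ν k))

lemma measurable_dualDensity (s γ : ℝ) (hu : Measurable u) (hV : Measurable V) (ρ : ℝ≥0∞)
    (k : ℤ) : Measurable (dualDensity s γ u V ρ k) := by
  have hU := measurable_measure_dyadicBall (weightMeasure u) k
  exact ((hu.mul (hV.pow_const γ)).mul ((hU.pow_const _).mul_const _).inv).indicator
    (measurableSet_le (measurable_localScale u hV k) measurable_const)

lemma IsA1Weight.localScale_le_decay_mul [Nonempty ι] (hu : IsA1Weight u C)
    (V : (ι → ℝ) → ℝ≥0∞) (k : ℤ) (x : ι → ℝ) :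
    localScale u V k x ≤ decay C * localScale u V (k + 1) x := by
  rw [localScale, localScale, mul_left_comm]
  gcongr
  exact hu.measure_dyadicBall_le_decay_mul k x

lemma IsA1Weight.measure_rpow_mul_le (hu : IsA1Weight u C) {s : ℝ} (hs : 0 ≤ s)
    {ν : Measure (ι → ℝ)} (hν : ν ≪ volume) (k : ℤ) (x : ι → ℝ) :
    weightMeasure u (dyadicBall k x) ^ s * ν (dyadicBall k x)
      ≤ (C * dyadicVol ι k) ^ s * ∫⁻ y, u y ^ s ∂ν := by
  have hle : ∀ᵐ y ∂ν.restrict (dyadicBall k x), weightMeasure u (dyadicBall k x) ^ s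
      ≤ (C * dyadicVol ι k) ^ s * u y ^ s := by
    filter_upwards [(hν.restrict _).ae_le (hu.ae_le x (2 ^ k) (by positivity))] with y hy
    rw [← ENNReal.mul_rpow_of_nonneg _ _ hs, ← volume_dyadicBall k x]
    gcongr
    exact hy
  calc weightMeasure u (dyadicBall k x) ^ s * ν (dyadicBall k x)
      ≤ ∫⁻ y in dyadicBall k x, (C * dyadicVol ι k) ^ s * u y ^ s ∂ν := by
        rw [← setLIntegral_const]
        exact lintegral_mono_ae hle
    _ ≤ (C * dyadicVol ι k) ^ s * ∫⁻ y, u y ^ s ∂ν := by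
        rw [lintegral_const_mul _ (hu.measurable.pow_const s)]
        exact mul_le_mul_right (setLIntegral_le_lintegral _ _) _

lemma IsA1Weight.fracDensity_le_div_localScale (hu : IsA1Weight u C) {s : ℝ} (hs : 0 ≤ s)
    {ν : Measure (ι → ℝ)} (hν : ν ≪ volume) (k : ℤ) {x : ι → ℝ} (hx₀ : V x ≠ 0) (hx : V x ≠ ⊤) :
    fracDensity s V ν k x ≤ C ^ s * (∫⁻ y, u y ^ s ∂ν) / localScale u V k x ^ s := by
  have hVm₀ := mul_ne_zero hx₀ (dyadicVol_ne_zero (ι := ι) k)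
  have hVm := ENNReal.mul_ne_top hx (dyadicVol_ne_top (ι := ι) k)
  have hD₀ := mul_ne_zero hx₀ (hu.measure_dyadicBall_ne_zero k x)
  have hD := ENNReal.mul_ne_top hx (hu.measure_dyadicBall_ne_top k x)
  rw [fracDensity, localScale,
    ENNReal.div_le_iff (rpow_ne_zero_of_ne_top hVm₀ hVm s) (by finiteness),
    mul_comm, ← mul_div_assoc,
    ENNReal.le_div_iff_mul_le (.inl (rpow_ne_zero_of_ne_top hD₀ hD s))
      (.inl (by finiteness))]
  calc ν (dyadicBall k x) * (V x * weightMeasure u (dyadicBall k x)) ^ s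
      = V x ^ s * (weightMeasure u (dyadicBall k x) ^ s * ν (dyadicBall k x)) := by
        rw [ENNReal.mul_rpow_of_nonneg _ _ hs]; ring
    _ ≤ V x ^ s * ((C * dyadicVol ι k) ^ s * ∫⁻ y, u y ^ s ∂ν) := by
        exact mul_le_mul_right (hu.measure_rpow_mul_le hs hν k x) _
    _ = (V x * dyadicVol ι k) ^ s * (C ^ s * ∫⁻ y, u y ^ s ∂ν) := by
        simp only [ENNReal.mul_rpow_of_nonneg _ _ hs]; ring

end LocalScale

section ExceptionalSet

variable [Fintype ι] {u V : (ι → ℝ) → ℝ≥0∞} {C CV : ℝ≥0∞} {s γ : ℝ} {ρ l : ℝ≥0∞}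

lemma IsA1Weight.mul_le_dualDensity_mul (hu : IsA1Weight u C) (he : 0 ≤ 1 - s - γ) (hs : 0 ≤ s)
    (hρ₀ : ρ ≠ 0) (hρ : ρ ≠ ⊤) (hl₀ : l ≠ 0) (hl : l ≠ ⊤) {ν : Measure (ι → ℝ)} {k : ℤ}
    {x : ι → ℝ} (hx₀ : V x ≠ 0) (hx : V x ≠ ⊤) (hxZ : x ∈ exceptionalSet s γ u V ν ρ l k) :
    u x * V x ≤ l⁻¹ * ρ ^ (1 - s - γ) * (dualDensity s γ u V ρ k x * ν (dyadicBall k x)) := by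
  set e := 1 - s - γ
  set U := weightMeasure u (dyadicBall k x)
  set m := dyadicVol ι k
  have hUe : U ^ e * m ^ s ≠ 0 := mul_ne_zero
    (rpow_ne_zero_of_ne_top (hu.measure_dyadicBall_ne_zero k x)
      (hu.measure_dyadicBall_ne_top k x) e)
    (rpow_ne_zero_of_ne_top (dyadicVol_ne_zero k) (dyadicVol_ne_top k) s)
  have hUe' : U ^ e * m ^ s ≠ ⊤ :=
    ENNReal.mul_ne_top (ENNReal.rpow_ne_top_of_nonneg he (hu.measure_dyadicBall_ne_top k x))
      (ENNReal.rpow_ne_top_of_nonneg hs (dyadicVol_ne_top k))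
  have hlarge : l * (V x * U / ρ) ^ e * (V x * m) ^ s ≤ ν (dyadicBall k x) :=
    ENNReal.mul_le_of_le_div hxZ.2.le
  have hρe : ρ ^ e * (ρ ^ e)⁻¹ = 1 := ENNReal.mul_inv_cancel (rpow_ne_zero_of_ne_top hρ₀ hρ e)
    (ENNReal.rpow_ne_top_of_nonneg he hρ)
  have hVsplit : V x ^ γ * V x ^ e * V x ^ s = V x :=
    rpow_mul_rpow_mul_rpow_of_add_eq_one hx₀ hx (by simp only [e]; ring)
  have hdual : dualDensity s γ u V ρ k x = u x * V x ^ γ * (U ^ e * m ^ s)⁻¹ :=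
    indicator_of_mem (s := {x | localScale u V k x ≤ ρ}) hxZ.1 _
  calc u x * V x
      = u x * (V x ^ γ * V x ^ e * V x ^ s) * (l⁻¹ * l) * (ρ ^ e * (ρ ^ e)⁻¹)
          * ((U ^ e * m ^ s)⁻¹ * (U ^ e * m ^ s)) := by
        rw [hVsplit, ENNReal.inv_mul_cancel hl₀ hl, hρe,
          ENNReal.inv_mul_cancel hUe hUe', mul_one, mul_one, mul_one]
    _ = l⁻¹ * ρ ^ e * (u x * V x ^ γ * (U ^ e * m ^ s)⁻¹
          * (l * (V x * U / ρ) ^ e * (V x * m) ^ s)) := by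
        rw [ENNReal.div_rpow_of_nonneg _ _ he, ENNReal.mul_rpow_of_nonneg _ _ he,
          ENNReal.mul_rpow_of_nonneg _ _ hs, div_eq_mul_inv]
        ring
    _ ≤ l⁻¹ * ρ ^ e * (dualDensity s γ u V ρ k x * ν (dyadicBall k x)) := by
        rw [hdual]
        gcongr

lemma IsA1Weight.measure_exceptionalSet_le (hu : IsA1Weight u C) (hV : IsA1Weight V CV)
    (he : 0 ≤ 1 - s - γ) (hs : 0 ≤ s) (hρ₀ : ρ ≠ 0) (hρ : ρ ≠ ⊤) (hl₀ : l ≠ 0) (hl : l ≠ ⊤)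
    (ν : Measure (ι → ℝ)) [SFinite ν] (k : ℤ) :
    weightMeasure (fun x ↦ u x * V x) (exceptionalSet s γ u V ν ρ l k)
      ≤ l⁻¹ * ρ ^ (1 - s - γ)
        * ∫⁻ y, weightMeasure (dualDensity s γ u V ρ k) (dyadicBall k y) ∂ν := by
  have hZ := measurableSet_exceptionalSet s γ u hV.measurable ν ρ l k
  have hdual := measurable_dualDensity s γ hu.measurable hV.measurable ρ k
  have hν := measurable_measure_dyadicBall ν k
  calc weightMeasure (fun x ↦ u x * V x) (exceptionalSet s γ u V ν ρ l k)
      ≤ ∫⁻ x, l⁻¹ * ρ ^ (1 - s - γ) * (dualDensity s γ u V ρ k x * ν (dyadicBall k x)) := by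
        rw [withDensity_apply _ hZ]
        refine le_trans (setLIntegral_mono_ae' hZ ?_) (setLIntegral_le_lintegral _ _)
        filter_upwards [hV.ae_ne_zero, hV.ae_ne_top] with x hx₀ hx hxZ
        exact hu.mul_le_dualDensity_mul he hs hρ₀ hρ hl₀ hl hx₀ hx hxZ
    _ = l⁻¹ * ρ ^ (1 - s - γ)
          * ∫⁻ x, ν (dyadicBall k x) ∂weightMeasure (dualDensity s γ u V ρ k) := by
        rw [lintegral_withDensity_eq_lintegral_mul _ hdual hν,
          ← lintegral_const_mul _ (hdual.mul hν)]
        simp only [Pi.mul_apply]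
    _ = l⁻¹ * ρ ^ (1 - s - γ)
          * ∫⁻ y, weightMeasure (dualDensity s γ u V ρ k) (dyadicBall k y) ∂ν := by
        rw [lintegral_measure_dyadicBall_comm]

lemma IsA1Weight.measure_dualDensity_eq_zero (hu : IsA1Weight u C) (hV : IsA1Weight V CV)
    (s γ : ℝ) {k : ℤ} {y : ι → ℝ}
    (hy : CV * (C * 2 ^ Fintype.card ι) * ρ < dyadicMean V k y * weightMeasure u (dyadicBall k y)) :
    weightMeasure (dualDensity s γ u V ρ k) (dyadicBall k y) = 0 := by
  have hB := measurableSet_dyadicBall k y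
  have hzero : ∀ᵐ x ∂volume.restrict (dyadicBall k y), dualDensity s γ u V ρ k x = 0 := by
    filter_upwards [hV.ae_le y (2 ^ k) (by positivity), ae_restrict_mem hB] with x hVx hx
    refine indicator_of_notMem (s := {x | localScale u V k x ≤ ρ}) (fun hxρ ↦ hy.not_ge ?_) _
    have hmean : dyadicMean V k y ≤ CV * V x := by
      refine ENNReal.div_le_of_le_mul ?_
      rwa [mul_right_comm, ← volume_dyadicBall k y]
    calc dyadicMean V k y * weightMeasure u (dyadicBall k y)
        ≤ CV * V x * (C * 2 ^ Fintype.card ι * weightMeasure u (dyadicBall k x)) :=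
          mul_le_mul' hmean (hu.measure_dyadicBall_le_of_mem (mem_dyadicBall_comm.1 hx))
      _ = CV * (C * 2 ^ Fintype.card ι) * localScale u V k x := by rw [localScale]; ring
      _ ≤ CV * (C * 2 ^ Fintype.card ι) * ρ := by gcongr; exact hxρ
  rw [withDensity_apply _ hB, lintegral_congr_ae hzero, lintegral_zero]

lemma IsA1Weight.dualDensity_le_of_mem (hu : IsA1Weight u C) (V : (ι → ℝ) → ℝ≥0∞) (γ : ℝ)
    (hs : 0 ≤ s) (he : 0 ≤ 1 - s - γ) (ρ : ℝ≥0∞) {k : ℤ} {x y : ι → ℝ} (hx : x ∈ dyadicBall k y) :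
    dualDensity s γ u V ρ k x ≤ (C * 2 ^ Fintype.card ι) ^ (1 - s - γ)
      * (weightMeasure u (dyadicBall k y) ^ (1 - s - γ) * dyadicVol ι k ^ s)⁻¹
      * (u x * V x ^ γ) := by
  have hU₀ := hu.measure_dyadicBall_ne_zero k y
  have hU := hu.measure_dyadicBall_ne_top k y
  have hm := dyadicVol_ne_top (ι := ι) k
  have hUm₀ : weightMeasure u (dyadicBall k y) ^ (1 - s - γ) * dyadicVol ι k ^ s ≠ 0 := mul_ne_zero
    (rpow_ne_zero_of_ne_top hU₀ hU _) (rpow_ne_zero_of_ne_top (dyadicVol_ne_zero k) hm s)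
  have hUm : weightMeasure u (dyadicBall k y) ^ (1 - s - γ) * dyadicVol ι k ^ s
      ≤ (C * 2 ^ Fintype.card ι) ^ (1 - s - γ)
        * (weightMeasure u (dyadicBall k x) ^ (1 - s - γ) * dyadicVol ι k ^ s) := by
    rw [← mul_assoc, ← ENNReal.mul_rpow_of_nonneg _ _ he]
    gcongr
    exact hu.measure_dyadicBall_le_of_mem (mem_dyadicBall_comm.1 hx)
  calc dualDensity s γ u V ρ k x
      ≤ u x * V x ^ γ
          * (weightMeasure u (dyadicBall k x) ^ (1 - s - γ) * dyadicVol ι k ^ s)⁻¹ :=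
        indicator_le_self' (fun _ _ ↦ zero_le) x
    _ ≤ u x * V x ^ γ * ((C * 2 ^ Fintype.card ι) ^ (1 - s - γ)
          * (weightMeasure u (dyadicBall k y) ^ (1 - s - γ) * dyadicVol ι k ^ s)⁻¹) := by
        gcongr
        exact inv_le_mul_inv_of_le_mul hUm₀ (by finiteness) hUm
    _ = _ := mul_comm _ _

lemma IsA1Weight.measure_dualDensity_le (hu : IsA1Weight u C) (hV : Measurable V)
    (hs : 0 ≤ s) (hγ : 0 ≤ γ) (he : 0 ≤ 1 - s - γ) (ρ : ℝ≥0∞) {K : ℝ≥0∞} {k : ℤ} {y : ι → ℝ}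
    (hK : ∫⁻ x in dyadicBall k y, V x ^ γ ∂weightMeasure u
      ≤ K * dyadicMean V k y ^ γ * weightMeasure u (dyadicBall k y)) :
    weightMeasure (dualDensity s γ u V ρ k) (dyadicBall k y)
      ≤ (C * 2 ^ Fintype.card ι) ^ (1 - s - γ) * K
        * (dyadicMean u k y ^ s * (dyadicMean V k y * weightMeasure u (dyadicBall k y)) ^ γ) := by
  set e := 1 - s - γ
  set U := weightMeasure u (dyadicBall k y)
  set m := dyadicVol ι k
  have hB := measurableSet_dyadicBall k y
  have hU₀ : U ≠ 0 := hu.measure_dyadicBall_ne_zero k y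
  have hUt : U ≠ ⊤ := hu.measure_dyadicBall_ne_top k y
  have hUe₀ : U ^ e ≠ 0 := rpow_ne_zero_of_ne_top hU₀ hUt e
  have hUe : U ^ e ≠ ⊤ := ENNReal.rpow_ne_top_of_nonneg he hUt
  have hVγ : Measurable fun x ↦ V x ^ γ := hV.pow_const γ
  have hUsplit : U ^ e * U ^ s * U ^ γ = U :=
    rpow_mul_rpow_mul_rpow_of_add_eq_one hU₀ hUt (by simp only [e]; ring)
  have hmean : dyadicMean u k y ^ s = U ^ s * (m ^ s)⁻¹ := ENNReal.div_rpow_of_nonneg _ _ hs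
  calc weightMeasure (dualDensity s γ u V ρ k) (dyadicBall k y)
      ≤ ∫⁻ x in dyadicBall k y,
          (C * 2 ^ Fintype.card ι) ^ e * (U ^ e * m ^ s)⁻¹ * (u x * V x ^ γ) := by
        rw [withDensity_apply _ hB]
        exact setLIntegral_mono' hB fun x hx ↦ hu.dualDensity_le_of_mem V γ hs he ρ hx
    _ = (C * 2 ^ Fintype.card ι) ^ e * (U ^ e * m ^ s)⁻¹
          * ∫⁻ x in dyadicBall k y, V x ^ γ ∂weightMeasure u := by
        rw [restrict_withDensity hB, lintegral_withDensity_eq_lintegral_mul _ hu.measurable hVγ,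
          ← lintegral_const_mul _ (hu.measurable.mul hVγ)]
        simp only [Pi.mul_apply]
    _ ≤ (C * 2 ^ Fintype.card ι) ^ e * (U ^ e * m ^ s)⁻¹
          * (K * dyadicMean V k y ^ γ * (U ^ e * U ^ s * U ^ γ)) := by
        rw [hUsplit]
        gcongr
    _ = (C * 2 ^ Fintype.card ι) ^ e * K * ((U ^ e)⁻¹ * U ^ e)
          * ((U ^ s * (m ^ s)⁻¹) * (dyadicMean V k y * U) ^ γ) := by
        rw [ENNReal.mul_inv (.inl hUe₀) (.inl hUe), ENNReal.mul_rpow_of_nonneg _ _ hγ]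
        ring
    _ = (C * 2 ^ Fintype.card ι) ^ e * K
          * (dyadicMean u k y ^ s * (dyadicMean V k y * U) ^ γ) := by
        rw [ENNReal.inv_mul_cancel hUe₀ hUe, mul_one, hmean]

end ExceptionalSet

section KernelSum

variable [Fintype ι]

lemma dyadicMean_mul_measure_comm (u V : (ι → ℝ) → ℝ≥0∞) (k : ℤ) (y : ι → ℝ) :
    dyadicMean V k y * weightMeasure u (dyadicBall k y)
      = dyadicMean u k y * weightMeasure V (dyadicBall k y) := by
  simp only [dyadicMean, div_eq_mul_inv]
  ring

variable {u V : (ι → ℝ) → ℝ≥0∞} {C CV K D ρ : ℝ≥0∞} {s γ : ℝ} {k : ℤ} {y : ι → ℝ}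

lemma rpow_mean_mul_le_of_mean_le (hs : 0 ≤ s) (hγ : 0 ≤ γ) (hρ₀ : ρ ≠ 0) (hρ : ρ ≠ ⊤)
    (hmean : dyadicMean u k y ≤ D * u y) :
    dyadicMean u k y ^ s * (dyadicMean V k y * weightMeasure u (dyadicBall k y)) ^ γ
      ≤ D ^ (s + γ) * ρ ^ γ * u y ^ s * (weightMeasure V (dyadicBall k y) * u y / ρ) ^ γ := by
  have hργ : ρ ^ γ * (weightMeasure V (dyadicBall k y) * u y / ρ) ^ γ
      = (weightMeasure V (dyadicBall k y) * u y) ^ γ := by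
    rw [← ENNReal.mul_rpow_of_nonneg _ _ hγ, ENNReal.mul_div_cancel hρ₀ hρ]
  calc dyadicMean u k y ^ s * (dyadicMean V k y * weightMeasure u (dyadicBall k y)) ^ γ
      ≤ (D * u y) ^ s * (D * u y * weightMeasure V (dyadicBall k y)) ^ γ := by
        rw [dyadicMean_mul_measure_comm]
        gcongr
    _ = D ^ s * D ^ γ * u y ^ s * (weightMeasure V (dyadicBall k y) * u y) ^ γ := by
        rw [mul_assoc D, mul_comm (u y), ENNReal.mul_rpow_of_nonneg _ _ hs,
          ENNReal.mul_rpow_of_nonneg D _ hγ]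
        ring
    _ = D ^ (s + γ) * ρ ^ γ * u y ^ s * (weightMeasure V (dyadicBall k y) * u y / ρ) ^ γ := by
        rw [← hργ, ENNReal.rpow_add_of_nonneg _ _ hs hγ]
        ring

lemma IsA1Weight.rpow_mean_mul_le_of_le (hV : IsA1Weight V CV) (hs : 0 ≤ s) (hγ : 0 ≤ γ)
    (hy₀ : u y ≠ 0) (hy : u y ≠ ⊤)
    (hle : dyadicMean V k y * weightMeasure u (dyadicBall k y) ≤ D * ρ) :
    dyadicMean u k y ^ s * (dyadicMean V k y * weightMeasure u (dyadicBall k y)) ^ γ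
      ≤ D ^ (s + γ) * ρ ^ γ * u y ^ s * (ρ / (weightMeasure V (dyadicBall k y) * u y)) ^ s := by
  have hW₀ := hV.measure_dyadicBall_ne_zero k y
  have hW := hV.measure_dyadicBall_ne_top k y
  have hmean : dyadicMean u k y ≤ D * (u y * (ρ / (weightMeasure V (dyadicBall k y) * u y))) := by
    rw [mul_comm (weightMeasure V _), ← mul_div_assoc (u y), ENNReal.mul_div_mul_left _ _ hy₀ hy,
      ← mul_div_assoc, ENNReal.le_div_iff_mul_le (.inl hW₀) (.inl hW),
      ← dyadicMean_mul_measure_comm]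
    exact hle
  calc dyadicMean u k y ^ s * (dyadicMean V k y * weightMeasure u (dyadicBall k y)) ^ γ
      ≤ (D * (u y * (ρ / (weightMeasure V (dyadicBall k y) * u y)))) ^ s * (D * ρ) ^ γ := by
        gcongr
    _ = D ^ (s + γ) * ρ ^ γ * u y ^ s
          * (ρ / (weightMeasure V (dyadicBall k y) * u y)) ^ s := by
        rw [ENNReal.rpow_add_of_nonneg _ _ hs hγ]
        simp only [ENNReal.mul_rpow_of_nonneg _ _ hs, ENNReal.mul_rpow_of_nonneg _ _ hγ]
        ring

lemma IsA1Weight.tsum_measure_dualDensity_le [Nonempty ι] (hu : IsA1Weight u C)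
    (hV : IsA1Weight V CV) (hs : 0 < s) (hγ : 0 < γ) (he : 0 ≤ 1 - s - γ)
    (hD : D = C * 2 ^ Fintype.card ι) (hρ₀ : ρ ≠ 0) (hρ : ρ ≠ ⊤) (hy₀ : u y ≠ 0) (hy : u y ≠ ⊤)
    (hmean : ∀ k, dyadicMean u k y ≤ D * u y)
    (hK : ∀ k, ∫⁻ x in dyadicBall k y, V x ^ γ ∂weightMeasure u
      ≤ K * dyadicMean V k y ^ γ * weightMeasure u (dyadicBall k y)) :
    ∑' k, weightMeasure (dualDensity s γ u V ρ k) (dyadicBall k y)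
      ≤ D ^ (1 - s - γ) * K * (D ^ (s + γ) * (1 - decay CV ^ γ)⁻¹
          + (CV * D) ^ (s + γ) * (1 - decay CV ^ s)⁻¹) * (ρ ^ γ * u y ^ s) := by
  have hdual : ∀ k, weightMeasure (dualDensity s γ u V ρ k) (dyadicBall k y)
      ≤ D ^ (1 - s - γ) * K * (dyadicMean u k y ^ s
        * (dyadicMean V k y * weightMeasure u (dyadicBall k y)) ^ γ) := fun k ↦ by
    rw [hD]
    exact hu.measure_dualDensity_le hV.measurable hs.le hγ.le he ρ (hK k)
  calc ∑' k, weightMeasure (dualDensity s γ u V ρ k) (dyadicBall k y)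
      ≤ D ^ (1 - s - γ) * K * (D ^ (s + γ) * ρ ^ γ * u y ^ s) * (1 - decay CV ^ γ)⁻¹
        + D ^ (1 - s - γ) * K * ((CV * D) ^ (s + γ) * ρ ^ γ * u y ^ s)
          * (1 - decay CV ^ s)⁻¹ := by
        refine tsum_le_of_two_regimes (g := fun k ↦ weightMeasure V (dyadicBall k y) * u y)
          (ρ := ρ) hγ hs (fun k ↦ ?_) (fun k _ ↦ ?_) (fun k _ ↦ ?_)
        · rw [← mul_assoc]
          gcongr
          exact hV.measure_dyadicBall_le_decay_mul k y
        · rw [mul_assoc (_ * K)]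
          exact (hdual k).trans
            (mul_le_mul_right (rpow_mean_mul_le_of_mean_le hs.le hγ.le hρ₀ hρ (hmean k)) _)
        · obtain hlt | hle := lt_or_ge (CV * D * ρ)
            (dyadicMean V k y * weightMeasure u (dyadicBall k y))
          · rw [hu.measure_dualDensity_eq_zero hV s γ (by rwa [← hD])]
            exact zero_le
          · rw [mul_assoc (_ * K)]
            exact (hdual k).trans
              (mul_le_mul_right (hV.rpow_mean_mul_le_of_le hs.le hγ.le hy₀ hy hle) _)
    _ = _ := by ring

lemma IsA1Weight.exists_tsum_dualDensity_le [Nonempty ι] (hu : IsA1Weight u C)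
    (hV : IsA1Weight V CV) (hs₀ : 0 < s) (hs₁ : s < 1) :
    ∃ γ ∈ Ioo 0 (1 - s), ∃ K : ℝ≥0∞, K ≠ ⊤ ∧ ∀ ρ : ℝ≥0∞, ρ ≠ 0 → ρ ≠ ⊤ → ∀ᵐ y,
      ∑' k, weightMeasure (dualDensity s γ u V ρ k) (dyadicBall k y) ≤ K * (ρ ^ γ * u y ^ s) := by
  obtain ⟨γ, hγ, K, hK, hrev⟩ := hu.exists_lintegral_rpow_le (sub_pos.2 hs₁)
  have he : 0 ≤ 1 - s - γ := (sub_pos.2 hγ.2).le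
  have hsγ : 0 ≤ s + γ := (add_pos hs₀ hγ.1).le
  have hC := hu.const_ne_top
  have hCV := hV.const_ne_top
  have hlow := inv_one_sub_decay_rpow_ne_top hCV hγ.1
  have hhigh := inv_one_sub_decay_rpow_ne_top hCV hs₀
  refine ⟨γ, hγ, (C * 2 ^ Fintype.card ι) ^ (1 - s - γ) * K
    * ((C * 2 ^ Fintype.card ι) ^ (s + γ) * (1 - decay CV ^ γ)⁻¹
      + (CV * (C * 2 ^ Fintype.card ι)) ^ (s + γ) * (1 - decay CV ^ s)⁻¹),
    by finiteness, fun ρ hρ₀ hρ ↦ ?_⟩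
  filter_upwards [hu.ae_ne_zero, hu.ae_ne_top, hu.ae_dyadicMean_le] with y hy₀ hy hmean
  exact hu.tsum_measure_dualDensity_le hV hs₀ hγ.1 he rfl hρ₀ hρ hy₀ hy hmean
    fun k ↦ hrev V hV.measurable k y (hV.dyadicMean_ne_zero k y) (hV.dyadicMean_ne_top k y)

end KernelSum

section WeakType

variable [Fintype ι] {u V : (ι → ℝ) → ℝ≥0∞} {C CV K ρ l : ℝ≥0∞} {s γ p : ℝ}
  {ν : Measure (ι → ℝ)}

lemma IsA1Weight.measure_iUnion_exceptionalSet_le [SFinite ν] (hu : IsA1Weight u C)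
    (hV : IsA1Weight V CV) (he : 0 ≤ 1 - s - γ) (hs : 0 ≤ s) (hν : ν ≪ volume) (hρ₀ : ρ ≠ 0)
    (hρ : ρ ≠ ⊤) (hl₀ : l ≠ 0) (hl : l ≠ ⊤)
    (hK : ∀ᵐ y, ∑' k, weightMeasure (dualDensity s γ u V ρ k) (dyadicBall k y)
      ≤ K * (ρ ^ γ * u y ^ s)) :
    weightMeasure (fun x ↦ u x * V x) (⋃ k, exceptionalSet s γ u V ν ρ l k)
      ≤ K * (l⁻¹ * ρ ^ (1 - s) * ∫⁻ y, u y ^ s ∂ν) := by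
  have hmeas := fun k ↦ measurable_measure_dyadicBall (weightMeasure (dualDensity s γ u V ρ k)) k
  have hus := hu.measurable.pow_const s
  calc weightMeasure (fun x ↦ u x * V x) (⋃ k, exceptionalSet s γ u V ν ρ l k)
      ≤ ∑' k, l⁻¹ * ρ ^ (1 - s - γ)
          * ∫⁻ y, weightMeasure (dualDensity s γ u V ρ k) (dyadicBall k y) ∂ν :=
        (measure_iUnion_le _).trans <| ENNReal.tsum_le_tsum fun k ↦
          hu.measure_exceptionalSet_le hV he hs hρ₀ hρ hl₀ hl ν k
    _ = l⁻¹ * ρ ^ (1 - s - γ)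
          * ∫⁻ y, ∑' k, weightMeasure (dualDensity s γ u V ρ k) (dyadicBall k y) ∂ν := by
        rw [ENNReal.tsum_mul_left, lintegral_tsum fun k ↦ (hmeas k).aemeasurable]
    _ ≤ l⁻¹ * ρ ^ (1 - s - γ) * ∫⁻ y, K * (ρ ^ γ * u y ^ s) ∂ν :=
        mul_le_mul_right (lintegral_mono_ae (hν.ae_le hK)) _
    _ = K * (l⁻¹ * (ρ ^ (1 - s - γ) * ρ ^ γ) * ∫⁻ y, u y ^ s ∂ν) := by
        rw [lintegral_const_mul _ (hus.const_mul _), lintegral_const_mul _ hus]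
        ring
    _ = K * (l⁻¹ * ρ ^ (1 - s) * ∫⁻ y, u y ^ s ∂ν) := by
        rw [← ENNReal.rpow_add _ _ hρ₀ hρ, sub_add_cancel]

lemma IsA1Weight.tsum_fracDensity_rpow_le [Nonempty ι] (hu : IsA1Weight u C) (hp : 0 < p)
    (hs : 0 < s) (he : 0 < 1 - s - γ) (hν : ν ≪ volume)
    (hN : C ^ s * ∫⁻ y, u y ^ s ∂ν ≤ l * ρ ^ s) {x : ι → ℝ} (hx₀ : V x ≠ 0) (hx : V x ≠ ⊤)
    (hxZ : x ∉ ⋃ k, exceptionalSet s γ u V ν ρ l k) :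
    ∑' k, fracDensity s V ν k x ^ (1 / p)
      ≤ l ^ (1 / p) * ((1 - decay C ^ ((1 - s - γ) * (1 / p)))⁻¹
          + (1 - decay C ^ (s * (1 / p)))⁻¹) := by
  have hp' : 0 < 1 / p := one_div_pos.2 hp
  rw [mul_add]
  refine tsum_le_of_two_regimes (g := fun k ↦ localScale u V k x) (ρ := ρ) (mul_pos he hp')
    (mul_pos hs hp') (fun k ↦ hu.localScale_le_decay_mul V k x) (fun k hk ↦ ?_) (fun k _ ↦ ?_)
  · rw [ENNReal.rpow_mul, ← ENNReal.mul_rpow_of_nonneg _ _ hp'.le]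
    gcongr
    exact not_lt.1 fun hlt ↦ hxZ (mem_iUnion.2 ⟨k, hk, hlt⟩)
  · rw [ENNReal.rpow_mul, ← ENNReal.mul_rpow_of_nonneg _ _ hp'.le]
    gcongr
    calc fracDensity s V ν k x
        ≤ C ^ s * (∫⁻ y, u y ^ s ∂ν) / localScale u V k x ^ s :=
          hu.fracDensity_le_div_localScale hs.le hν k hx₀ hx
      _ ≤ l * ρ ^ s / localScale u V k x ^ s := by gcongr
      _ = l * (ρ / localScale u V k x) ^ s := by
          rw [ENNReal.div_rpow_of_nonneg _ _ hs.le, mul_div_assoc]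

lemma rpow_le_of_forall_scale {a M N : ℝ≥0∞} (hs₀ : 0 < s) (hs₁ : s < 1) (hM₀ : M ≠ 0)
    (hM : M ≠ ⊤) (hN : N ≠ ⊤) (hl₀ : l ≠ 0) (hl : l ≠ ⊤)
    (h : ∀ ρ : ℝ≥0∞, ρ ≠ 0 → ρ ≠ ⊤ → M * N ≤ l * ρ ^ s → a ≤ K * (l⁻¹ * ρ ^ (1 - s) * N)) :
    a ^ s ≤ K ^ s * M ^ (1 - s) * (l⁻¹ * N) := by
  obtain rfl | hN₀ := eq_or_ne N 0
  · have ha : a = 0 := by simpa using h 1 one_ne_zero one_ne_top (by simp)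
    simp [ha, hs₀]
  have hX₀ : M * N / l ≠ 0 := ENNReal.div_ne_zero.2 ⟨mul_ne_zero hM₀ hN₀, hl⟩
  have hX : M * N / l ≠ ⊤ := by finiteness
  have hY₀ : l⁻¹ * N ≠ 0 := mul_ne_zero (ENNReal.inv_ne_zero.2 hl) hN₀
  have hY : l⁻¹ * N ≠ ⊤ := by finiteness
  have hscale : ((M * N / l) ^ s⁻¹) ^ s = M * N / l := ENNReal.rpow_inv_rpow hs₀.ne' _
  have ha := h ((M * N / l) ^ s⁻¹) (rpow_ne_zero_of_ne_top hX₀ hX _)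
    (ENNReal.rpow_ne_top_of_nonneg (inv_pos.2 hs₀).le hX)
    (by rw [hscale, ENNReal.mul_div_cancel hl₀ hl])
  calc a ^ s
      ≤ (K * (l⁻¹ * ((M * N / l) ^ s⁻¹) ^ (1 - s) * N)) ^ s := by gcongr
    _ = K ^ s * (M * (l⁻¹ * N)) ^ (1 - s) * (l⁻¹ * N) ^ s := by
        rw [mul_right_comm l⁻¹, ENNReal.mul_rpow_of_nonneg _ _ hs₀.le,
          ENNReal.mul_rpow_of_nonneg _ _ hs₀.le, ← ENNReal.rpow_mul _ (1 - s), mul_comm (1 - s),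
          ENNReal.rpow_mul, hscale, div_eq_mul_inv, mul_comm l⁻¹, ← mul_assoc M]
        ring
    _ = K ^ s * M ^ (1 - s) * ((l⁻¹ * N) ^ (1 - s) * (l⁻¹ * N) ^ s) := by
        rw [ENNReal.mul_rpow_of_nonneg _ _ (sub_pos.2 hs₁).le]
        ring
    _ = K ^ s * M ^ (1 - s) * (l⁻¹ * N) := by
        rw [← ENNReal.rpow_add _ _ hY₀ hY, sub_add_cancel, ENNReal.rpow_one]

/-- The sum over all scales of the `1/p`-th powers of the fractional densities of a measure. With
`V ^ s = v` and `ν = |f| ^ p v dx` it dominates the fractional integral of `f v` divided by `v`. -/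
def fracSum (s p : ℝ) (V : (ι → ℝ) → ℝ≥0∞) (ν : Measure (ι → ℝ)) (x : ι → ℝ) : ℝ≥0∞ :=
  ∑' k, fracDensity s V ν k x ^ (1 / p)

lemma IsA1Weight.measure_lt_fracSum_le [Nonempty ι] [SFinite ν] (hu : IsA1Weight u C)
    (hV : IsA1Weight V CV) (hp : 0 < p) (hs : 0 < s) (he : 0 < 1 - s - γ) (hν : ν ≪ volume)
    (hρ₀ : ρ ≠ 0) (hρ : ρ ≠ ⊤) (hl₀ : l ≠ 0) (hl : l ≠ ⊤)
    (hK : ∀ᵐ y, ∑' k, weightMeasure (dualDensity s γ u V ρ k) (dyadicBall k y)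
      ≤ K * (ρ ^ γ * u y ^ s))
    (hN : C ^ s * ∫⁻ y, u y ^ s ∂ν ≤ l * ρ ^ s) :
    weightMeasure (fun x ↦ u x * V x)
        {x | l ^ (1 / p) * ((1 - decay C ^ ((1 - s - γ) * (1 / p)))⁻¹
          + (1 - decay C ^ (s * (1 / p)))⁻¹) < fracSum s p V ν x}
      ≤ K * (l⁻¹ * ρ ^ (1 - s) * ∫⁻ y, u y ^ s ∂ν) := by
  refine le_trans (measure_mono_ae ?_)
    (hu.measure_iUnion_exceptionalSet_le hV he.le hs.le hν hρ₀ hρ hl₀ hl hK)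
  filter_upwards [(withDensity_absolutelyContinuous _ _).ae_le hV.ae_ne_zero,
    (withDensity_absolutelyContinuous _ _).ae_le hV.ae_ne_top] with x hx₀ hx hlt
  by_contra hxZ
  exact (hu.tsum_fracDensity_rpow_le hp hs he hν hN hx₀ hx hxZ).not_gt hlt

lemma IsA1Weight.exists_weakType_fracSum [Nonempty ι] (hu : IsA1Weight u C) (hV : IsA1Weight V CV)
    (hp : 0 < p) (hs₀ : 0 < s) (hs₁ : s < 1) :
    ∃ K : ℝ≥0∞, K ≠ ⊤ ∧ ∀ (ν : Measure (ι → ℝ)) [SFinite ν], ν ≪ volume →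
      ∫⁻ y, u y ^ s ∂ν ≠ ⊤ → ∀ τ : ℝ≥0∞, τ ≠ 0 → τ ≠ ⊤ →
        weightMeasure (fun x ↦ u x * V x) {x | τ < fracSum s p V ν x} ^ s
          ≤ K * ((τ ^ p)⁻¹ * ∫⁻ y, u y ^ s ∂ν) := by
  obtain ⟨γ, hγ, K, hK, hdual⟩ := hu.exists_tsum_dualDensity_le hV hs₀ hs₁
  have he : 0 < 1 - s - γ := sub_pos.2 hγ.2
  have hp' : 0 < 1 / p := one_div_pos.2 hp
  have hC := hu.const_ne_top
  have hlow := inv_one_sub_decay_rpow_ne_top hC (mul_pos he hp')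
  have hhigh := inv_one_sub_decay_rpow_ne_top hC (mul_pos hs₀ hp')
  set S : ℝ≥0∞ := (1 - decay C ^ ((1 - s - γ) * (1 / p)))⁻¹ + (1 - decay C ^ (s * (1 / p)))⁻¹
    with hSdef
  have hS₀ : S ≠ 0 := by simp [hSdef, ENNReal.sub_eq_top_iff]
  have hS : S ≠ ⊤ := by finiteness
  refine ⟨K ^ s * (C ^ s + 1) ^ (1 - s) * S ^ p, by finiteness, fun ν _ hν hN τ hτ₀ hτ ↦ ?_⟩
  have hl₀ : (τ / S) ^ p ≠ 0 :=
    rpow_ne_zero_of_ne_top (ENNReal.div_ne_zero.2 ⟨hτ₀, hS⟩) (by finiteness) p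
  have hl : (τ / S) ^ p ≠ ⊤ := by finiteness
  have hτS : ((τ / S) ^ p) ^ (1 / p) * S = τ := by
    rw [one_div, ENNReal.rpow_rpow_inv hp.ne', ENNReal.div_mul_cancel hS₀ hS]
  have hbound := rpow_le_of_forall_scale (K := K)
    (a := weightMeasure (fun x ↦ u x * V x) {x | τ < fracSum s p V ν x})
    hs₀ hs₁ (M := C ^ s + 1) (by simp) (by finiteness) hN hl₀ hl fun ρ hρ₀ hρ hle ↦ by
      have hlevel := hu.measure_lt_fracSum_le hV hp hs₀ he hν hρ₀ hρ hl₀ hl (hdual ρ hρ₀ hρ)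
        (le_trans (by gcongr; exact le_self_add) hle)
      rwa [← hSdef, hτS] at hlevel
  rwa [ENNReal.div_rpow_of_nonneg _ _ hp.le, ENNReal.inv_div (.inl (by finiteness))
    (.inl (rpow_ne_zero_of_ne_top hS₀ hS p)), div_eq_mul_inv, mul_assoc (S ^ p),
    ← mul_assoc (_ * _) (S ^ p)] at hbound

end WeakType

section RieszPotential

variable [Fintype ι]

lemma inv_edist_rpow_le_tsum [Nonempty ι] {δ : ℝ} (hδ : 0 ≤ δ) {x y : ι → ℝ} (hxy : x ≠ y) :
    (edist x y ^ δ)⁻¹ ≤ 4 ^ δ * ∑' k,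
      (dyadicBall k x).indicator (fun _ ↦ (dyadicVol ι k ^ (δ / Fintype.card ι))⁻¹) y := by
  obtain ⟨j, hj, hj'⟩ := exists_mem_Ioc_zpow (dist_pos.2 hxy) one_lt_two
  have hmem : y ∈ dyadicBall (j + 1) x := Metric.mem_closedBall'.2 hj'
  have hside₀ : ENNReal.ofReal (2 * 2 ^ (j + 1)) ≠ 0 := (ENNReal.ofReal_pos.2 (by positivity)).ne'
  have hside : ENNReal.ofReal (2 * 2 ^ (j + 1)) ≤ 4 * edist x y := by
    rw [edist_dist, ← ENNReal.ofReal_ofNat 4, ← ENNReal.ofReal_mul (by norm_num)]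
    refine ENNReal.ofReal_le_ofReal ?_
    rw [zpow_add_one₀ two_ne_zero]
    linarith
  have hvol : dyadicVol ι (j + 1) ^ (δ / Fintype.card ι)
      = ENNReal.ofReal (2 * 2 ^ (j + 1)) ^ δ := by
    rw [dyadicVol, ← ENNReal.rpow_natCast, ← ENNReal.rpow_mul,
      mul_div_cancel₀ _ (Nat.cast_ne_zero.2 Fintype.card_ne_zero)]
  calc (edist x y ^ δ)⁻¹
      ≤ 4 ^ δ * (dyadicVol ι (j + 1) ^ (δ / Fintype.card ι))⁻¹ := by
        rw [hvol]
        refine inv_le_mul_inv_of_le_mul (rpow_ne_zero_of_ne_top hside₀ ofReal_ne_top δ)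
          (by finiteness) ?_
        rw [← ENNReal.mul_rpow_of_nonneg _ _ hδ]
        gcongr
    _ ≤ _ := by
        refine mul_le_mul_right (le_trans ?_ (ENNReal.le_tsum (j + 1))) _
        rw [indicator_of_mem hmem]

lemma lintegral_div_edist_rpow_le_tsum [Nonempty ι] {δ : ℝ} (hδ : 0 ≤ δ) {g : (ι → ℝ) → ℝ≥0∞}
    (hg : AEMeasurable g) (x : ι → ℝ) :
    ∫⁻ y, g y / edist x y ^ δ
      ≤ 4 ^ δ * ∑' k, weightMeasure g (dyadicBall k x) / dyadicVol ι k ^ (δ / Fintype.card ι) := by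
  have hmeas : ∀ k, AEMeasurable fun y ↦
      (dyadicBall k x).indicator (fun _ ↦ (dyadicVol ι k ^ (δ / Fintype.card ι))⁻¹) y * g y :=
    fun k ↦ (measurable_const.indicator (measurableSet_dyadicBall k x)).aemeasurable.mul hg
  calc ∫⁻ y, g y / edist x y ^ δ
      ≤ ∫⁻ y, 4 ^ δ * ∑' k, (dyadicBall k x).indicator
          (fun _ ↦ (dyadicVol ι k ^ (δ / Fintype.card ι))⁻¹) y * g y := by
        refine lintegral_mono_ae ?_
        filter_upwards [Measure.ae_ne volume x] with y hxy
        rw [div_eq_mul_inv, ENNReal.tsum_mul_right, ← mul_assoc, mul_comm]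
        gcongr
        exact inv_edist_rpow_le_tsum hδ hxy.symm
    _ = 4 ^ δ * ∑' k, ∫⁻ y, (dyadicBall k x).indicator
          (fun _ ↦ (dyadicVol ι k ^ (δ / Fintype.card ι))⁻¹) y * g y := by
        rw [lintegral_const_mul' _ _ (by finiteness), lintegral_tsum hmeas]
    _ = _ := by
        congr! 3 with k
        have hB := measurableSet_dyadicBall k x
        have hvol := rpow_ne_zero_of_ne_top (dyadicVol_ne_zero k) (dyadicVol_ne_top (ι := ι) k)
          (δ / Fintype.card ι)
        rw [withDensity_apply _ hB, ENNReal.div_eq_inv_mul,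
          ← lintegral_const_mul' _ _ (ENNReal.inv_ne_top.2 hvol), ← lintegral_indicator hB]
        simp only [indicator_mul_left]

variable {u V w f : (ι → ℝ) → ℝ≥0∞} {C CV D : ℝ≥0∞} {s p : ℝ}

lemma measure_mul_le_rpow_mul_rpow (hp : 1 ≤ p) (hf : AEMeasurable f) (hw : AEMeasurable w)
    (E : Set (ι → ℝ)) :
    weightMeasure (fun y ↦ f y * w y) E
      ≤ weightMeasure (fun y ↦ f y ^ p * w y) E ^ (1 / p) * weightMeasure w E ^ (1 - 1 / p) := by
  have hp₀ : 0 < p := one_pos.trans_le hp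
  have hp₁ : 0 ≤ 1 - 1 / p := sub_nonneg.2 ((div_le_one hp₀).2 hp)
  have hsplit : ∀ y, f y * w y = (f y ^ p * w y) ^ (1 / p) * w y ^ (1 - 1 / p) := fun y ↦ by
    rw [ENNReal.mul_rpow_of_nonneg _ _ (by positivity), one_div, ENNReal.rpow_rpow_inv hp₀.ne',
      mul_assoc, ← ENNReal.rpow_add_of_nonneg _ _ (by positivity) (by rwa [← one_div]),
      add_sub_cancel, ENNReal.rpow_one]
  simp only [withDensity_apply', hsplit]
  exact ENNReal.lintegral_mul_norm_pow_le ((hf.pow_const p).mul hw).restrict hw.restrict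
    (by positivity) hp₁ (add_sub_cancel _ _)

lemma measure_div_dyadicVol_rpow_le (hp : 1 ≤ p) (hs : 0 ≤ s) (hf : AEMeasurable f)
    (hV : Measurable V) {k : ℤ} {x : ι → ℝ} (hx₀ : V x ≠ 0) (hx : V x ≠ ⊤)
    (hmean : dyadicMean (fun y ↦ V y ^ s) k x ≤ D * V x ^ s) :
    weightMeasure (fun y ↦ f y * V y ^ s) (dyadicBall k x) / dyadicVol ι k ^ (1 - (1 - s) / p)
      ≤ D ^ (1 - 1 / p) * (V x ^ s
        * fracDensity s V (weightMeasure fun y ↦ f y ^ p * V y ^ s) k x ^ (1 / p)) := by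
  set ν := weightMeasure fun y ↦ f y ^ p * V y ^ s
  have hp₀ : 0 < p := one_pos.trans_le hp
  have hp₁ : 0 ≤ 1 - 1 / p := sub_nonneg.2 ((div_le_one hp₀).2 hp)
  have hp₂ : 0 ≤ 1 / p := by positivity
  have hm₀ := dyadicVol_ne_zero (ι := ι) k
  have hm := dyadicVol_ne_top (ι := ι) k
  have hν : ν (dyadicBall k x) = fracDensity s V ν k x * (V x ^ s * dyadicVol ι k ^ s) := by
    rw [fracDensity, ← ENNReal.mul_rpow_of_nonneg _ _ hs, ENNReal.div_mul_cancel
      (rpow_ne_zero_of_ne_top (mul_ne_zero hx₀ hm₀) (by finiteness) s) (by finiteness)]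
  have hm_split :
      (dyadicVol ι k ^ s) ^ (1 / p) * dyadicVol ι k ^ (1 - 1 / p)
        = dyadicVol ι k ^ (1 - (1 - s) / p) := by
    rw [← ENNReal.rpow_mul, ← ENNReal.rpow_add _ _ hm₀ hm]
    ring_nf
  have hV_split : (V x ^ s) ^ (1 / p) * (V x ^ s) ^ (1 - 1 / p) = V x ^ s := by
    rw [← ENNReal.rpow_add_of_nonneg _ _ hp₂ hp₁, add_sub_cancel, ENNReal.rpow_one]
  refine ENNReal.div_le_of_le_mul ?_
  calc weightMeasure (fun y ↦ f y * V y ^ s) (dyadicBall k x)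
      ≤ ν (dyadicBall k x) ^ (1 / p)
          * weightMeasure (fun y ↦ V y ^ s) (dyadicBall k x) ^ (1 - 1 / p) :=
        measure_mul_le_rpow_mul_rpow hp hf (hV.pow_const s).aemeasurable _
    _ ≤ (fracDensity s V ν k x * (V x ^ s * dyadicVol ι k ^ s)) ^ (1 / p)
          * (D * V x ^ s * dyadicVol ι k) ^ (1 - 1 / p) := by
        rw [hν, ← dyadicMean_mul_dyadicVol]
        gcongr
    _ = D ^ (1 - 1 / p) * (((V x ^ s) ^ (1 / p) * (V x ^ s) ^ (1 - 1 / p))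
          * fracDensity s V ν k x ^ (1 / p))
          * ((dyadicVol ι k ^ s) ^ (1 / p) * dyadicVol ι k ^ (1 - 1 / p)) := by
        simp only [ENNReal.mul_rpow_of_nonneg _ _ hp₁, ENNReal.mul_rpow_of_nonneg _ _ hp₂]
        ring
    _ = _ := by rw [hV_split, hm_split]

lemma IsA1Weight.const_ne_zero (hw : IsA1Weight w C) : C ≠ 0 := by
  obtain ⟨x, hx⟩ := hw.ae_dyadicMean_le.exists
  rintro rfl
  exact hw.dyadicMean_ne_zero 0 x (by simpa using hx 0)

lemma IsA1Weight.exists_lintegral_div_edist_le_fracSum [Nonempty ι] (hV : IsA1Weight V CV)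
    (hp : 1 ≤ p) (hs₀ : 0 < s) (hs₁ : s < 1) :
    ∃ K : ℝ≥0∞, K ≠ 0 ∧ K ≠ ⊤ ∧ ∀ f : (ι → ℝ) → ℝ≥0∞, AEMeasurable f → ∀ᵐ x,
      ∫⁻ y, f y * V y ^ s / edist x y ^ (Fintype.card ι * (1 - (1 - s) / p))
        ≤ K * (V x ^ s * fracSum s p V (weightMeasure fun y ↦ f y ^ p * V y ^ s) x) := by
  have hVs := hV.rpow hs₀.le hs₁.le
  have hcard : (Fintype.card ι : ℝ) ≠ 0 := Nat.cast_ne_zero.2 Fintype.card_ne_zero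
  have hp₀ : 0 < p := one_pos.trans_le hp
  have hβ : 0 ≤ 1 - (1 - s) / p := sub_nonneg.2 ((div_le_one hp₀).2 (by linarith))
  have hδ : 0 ≤ Fintype.card ι * (1 - (1 - s) / p) := by positivity
  have hC₀ := hVs.const_ne_zero
  have hC := hVs.const_ne_top
  refine ⟨4 ^ (Fintype.card ι * (1 - (1 - s) / p))
    * (CV ^ s * 2 ^ Fintype.card ι) ^ (1 - 1 / p), mul_ne_zero ?_ ?_, by finiteness,
    fun f hf ↦ ?_⟩
  · exact rpow_ne_zero_of_ne_top (by norm_num) (by norm_num) _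
  · exact rpow_ne_zero_of_ne_top (mul_ne_zero hC₀ (by simp)) (by finiteness) _
  filter_upwards [hV.ae_ne_zero, hV.ae_ne_top, hVs.ae_dyadicMean_le] with x hx₀ hx hmean
  refine (lintegral_div_edist_rpow_le_tsum hδ (hf.mul hVs.measurable.aemeasurable) x).trans ?_
  rw [mul_assoc, mul_div_cancel_left₀ _ hcard]
  gcongr
  rw [fracSum, ← ENNReal.tsum_mul_left, ← ENNReal.tsum_mul_left]
  refine ENNReal.tsum_le_tsum fun k ↦ ?_
  exact measure_div_dyadicVol_rpow_le hp hs₀.le hf hV.measurable hx₀ hx (hmean k)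

lemma lintegral_rpow_weightMeasure_mul (hf : AEMeasurable f) (hu : Measurable u)
    (hV : Measurable V) :
    ∫⁻ y, u y ^ s ∂weightMeasure (fun y ↦ f y ^ p * V y ^ s)
      = ∫⁻ y, f y ^ p * u y ^ s * V y ^ s := by
  refine (lintegral_withDensity_eq_lintegral_mul₀
    ((hf.pow_const p).mul (hV.pow_const s).aemeasurable) (hu.pow_const s).aemeasurable).trans ?_
  simp only [Pi.mul_apply, mul_right_comm]

lemma IsA1Weight.exists_weakType_lintegral_div_edist [Nonempty ι] (hu : IsA1Weight u C)
    (hV : IsA1Weight V CV) (hp : 1 ≤ p) (hs₀ : 0 < s) (hs₁ : s < 1) :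
    ∃ K : ℝ≥0∞, 0 < K ∧ K < ⊤ ∧ ∀ f : (ι → ℝ) → ℝ≥0∞, AEMeasurable f → ∀ t, t ≠ 0 → t ≠ ⊤ →
      weightMeasure (fun x ↦ u x * V x)
          {x | t * V x ^ s
            < ∫⁻ y, f y * V y ^ s / edist x y ^ (Fintype.card ι * (1 - (1 - s) / p))} ^ (s / p)
        ≤ K / t * (∫⁻ y, f y ^ p * u y ^ s * V y ^ s) ^ (1 / p) := by
  obtain ⟨c, hc₀, hc, hle⟩ := hV.exists_lintegral_div_edist_le_fracSum hp hs₀ hs₁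
  have hp₀ : 0 < p := one_pos.trans_le hp
  obtain ⟨K, hK, hweak⟩ := hu.exists_weakType_fracSum hV hp₀ hs₀ hs₁
  have hp' : 0 < 1 / p := by positivity
  refine ⟨K ^ (1 / p) * c + 1, by positivity, by finiteness, fun f hf t ht₀ ht ↦ ?_⟩
  set ν := weightMeasure fun y ↦ f y ^ p * V y ^ s
  rw [← lintegral_rpow_weightMeasure_mul hf hu.measurable hV.measurable]
  obtain hN_top | hN_top := eq_or_ne (∫⁻ y, u y ^ s ∂ν) ⊤
  · rw [hN_top, ENNReal.top_rpow_of_pos hp', ENNReal.mul_top (ENNReal.div_ne_zero.2 ⟨by simp, ht⟩)]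
    exact le_top
  have hlevel : weightMeasure (fun x ↦ u x * V x) {x | t * V x ^ s
        < ∫⁻ y, f y * V y ^ s / edist x y ^ (Fintype.card ι * (1 - (1 - s) / p))}
      ≤ weightMeasure (fun x ↦ u x * V x) {x | t / c < fracSum s p V ν x} := by
    refine measure_mono_ae ?_
    filter_upwards [(withDensity_absolutelyContinuous _ _).ae_le (hle f hf)] with x hx hlt
    refine ENNReal.div_lt_of_lt_mul' (lt_of_not_ge fun hge ↦ (lt_of_lt_of_le hlt hx).not_ge ?_)
    rw [mul_left_comm, mul_comm t]
    gcongr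
  calc _ ≤ (weightMeasure (fun x ↦ u x * V x) {x | t / c < fracSum s p V ν x} ^ s) ^ (1 / p) := by
        rw [← ENNReal.rpow_mul, mul_one_div]
        gcongr
    _ ≤ (K * (((t / c) ^ p)⁻¹ * ∫⁻ y, u y ^ s ∂ν)) ^ (1 / p) := by
        gcongr
        exact hweak ν (withDensity_absolutelyContinuous _ _) hN_top (t / c)
          (ENNReal.div_ne_zero.2 ⟨ht₀, hc⟩) (by finiteness)
    _ = K ^ (1 / p) * c / t * (∫⁻ y, u y ^ s ∂ν) ^ (1 / p) := by
        rw [ENNReal.mul_rpow_of_nonneg _ _ hp'.le, ENNReal.mul_rpow_of_nonneg _ _ hp'.le,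
          ENNReal.inv_rpow, one_div, ENNReal.rpow_rpow_inv hp₀.ne',
          ENNReal.inv_div (.inl hc) (.inl hc₀), mul_div_assoc, mul_assoc]
    _ ≤ (K ^ (1 / p) * c + 1) / t * (∫⁻ y, u y ^ s ∂ν) ^ (1 / p) := by
        gcongr
        exact le_self_add

end RieszPotential

section EuclideanSpace

variable {n : ℕ} {α p q : ℝ} {f v w : ESp n → ℝ}

lemma wMeas_eq_weightMeasure (w : ESp n → ℝ) (E : Set (ESp n)) :
    wMeas w E
      = weightMeasure (fun x : Fin n → ℝ ↦ ENNReal.ofReal (w (.toLp 2 x))) (.toLp 2 ⁻¹' E) := by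
  rw [withDensity_apply', wMeas]
  exact ((PiLp.volume_preserving_toLp (Fin n)).setLIntegral_comp_preimage_emb
    (MeasurableEquiv.toLp 2 (Fin n → ℝ)).measurableEmbedding _ _).symm

lemma exists_isCube_preimage_toLp_eq_closedBall (x : Fin n → ℝ) {r : ℝ} (hr : 0 < r) :
    ∃ Q : Set (ESp n), IsCube Q ∧ WithLp.toLp 2 ⁻¹' Q = Metric.closedBall x r := by
  refine ⟨_, ⟨fun i ↦ x i - r, 2 * r, by positivity, rfl⟩, ?_⟩
  ext y
  simp only [Set.mem_preimage, Set.mem_ofPred_eq, Metric.mem_closedBall, dist_pi_le_iff hr.le,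
    Real.dist_eq, abs_le]
  refine forall_congr' fun i ↦ and_congr ?_ ?_ <;> constructor <;> intro h <;> linarith

lemma exists_isA1Weight_ofReal (hw : Measurable w) (hpos : ∀ᵐ x, 0 < w x) (hA : IsA1 w) :
    ∃ C, IsA1Weight (fun x : Fin n → ℝ ↦ ENNReal.ofReal (w (.toLp 2 x))) C := by
  obtain ⟨C, hC, hA⟩ := hA
  refine ⟨C, (hw.comp (WithLp.measurable_toLp 2 _)).ennreal_ofReal, ?_,
    .of_forall fun _ ↦ ENNReal.ofReal_ne_top, hC.ne, fun x r hr ↦ ?_⟩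
  · filter_upwards [(PiLp.volume_preserving_toLp (Fin n)).quasiMeasurePreserving.ae hpos] with x hx
    exact (ENNReal.ofReal_pos.2 hx).ne'
  · obtain ⟨Q, hQ, hpre⟩ := exists_isCube_preimage_toLp_eq_closedBall x hr
    have hmap : MeasurePreserving (WithLp.toLp 2 : (Fin n → ℝ) → ESp n)
        (volume.restrict (Metric.closedBall x r)) (volume.restrict Q) := by
      rw [← hpre]
      exact (PiLp.volume_preserving_toLp (Fin n)).restrict_preimage_emb
        (MeasurableEquiv.toLp 2 (Fin n → ℝ)).measurableEmbedding Q
    have hvol : volume Q = volume (Metric.closedBall x r) := by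
      simpa using (hmap.measure_preimage_emb
        (MeasurableEquiv.toLp 2 (Fin n → ℝ)).measurableEmbedding univ).symm
    have hmean := hA Q hQ
    rw [wMeas_eq_weightMeasure, hpre, hvol, ENNReal.inv_mul_le_iff (volume_closedBall_ne_zero x hr)
      (volume_closedBall_ne_top x r)] at hmean
    have hinf : ∀ᵐ y ∂volume.restrict Q,
        essInf (fun x ↦ ENNReal.ofReal (w x)) (volume.restrict Q) ≤ ENNReal.ofReal (w y) :=
      ae_essInf_le
    filter_upwards [hmap.quasiMeasurePreserving.ae hinf] with y hy
    refine hmean.trans ?_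
    rw [mul_left_comm, ← mul_assoc]
    gcongr

lemma edist_le_edist_toLp (x y : Fin n → ℝ) :
    edist x y ≤ edist (WithLp.toLp 2 x : ESp n) (.toLp 2 y) := by
  simpa using PiLp.antilipschitzWith_toLp 2 (fun _ : Fin n ↦ ℝ) x y

lemma ofReal_fracI_le (hα : α < n) (f : ESp n → ℝ) (x : Fin n → ℝ) :
    ENNReal.ofReal (fracI α f (.toLp 2 x))
      ≤ ∫⁻ y : Fin n → ℝ, ENNReal.ofReal |f (.toLp 2 y)| / edist x y ^ (n - α) := by
  have hδ : 0 < n - α := sub_pos.2 hα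
  calc ENNReal.ofReal (fracI α f (.toLp 2 x))
      ≤ ‖fracI α f (.toLp 2 x)‖ₑ := Real.ofReal_le_enorm _
    _ ≤ ∫⁻ y, ‖f y / dist (.toLp 2 x) y ^ (n - α)‖ₑ := enorm_integral_le_lintegral_enorm _
    _ = ∫⁻ y : Fin n → ℝ, ‖f (.toLp 2 y) / dist (.toLp 2 x : ESp n) (.toLp 2 y) ^ (n - α)‖ₑ :=
        ((PiLp.volume_preserving_toLp (Fin n)).lintegral_comp_emb
          (MeasurableEquiv.toLp 2 (Fin n → ℝ)).measurableEmbedding _).symm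
    _ ≤ _ := by
        gcongr with y
        obtain rfl | hxy := eq_or_ne x y
        · simp [Real.zero_rpow hδ.ne']
        have hpos : 0 < dist (.toLp 2 x : ESp n) (.toLp 2 y) := dist_pos.2 (by simpa using hxy)
        rw [Real.enorm_eq_ofReal_abs, abs_div, abs_of_pos (Real.rpow_pos_of_pos hpos _),
          ENNReal.ofReal_div_of_pos (Real.rpow_pos_of_pos hpos _),
          ← ENNReal.ofReal_rpow_of_pos hpos, ← edist_dist]
        gcongr
        exact edist_le_edist_toLp x y

lemma fracI_mul_eq_zero (hn : 0 < n) (hv : Measurable v) (hpos : ∀ᵐ x, 0 < v x)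
    (hf : ¬ AEMeasurable f) (x : ESp n) : fracI α (fun y ↦ f y * v y) x = 0 := by
  refine integral_undef fun hint ↦ hf ?_
  have : Nonempty (Fin n) := ⟨⟨0, hn⟩⟩
  have hfactor : Measurable fun y ↦ dist x y ^ ((n : ℝ) - α) / v y := by fun_prop
  refine (hint.aemeasurable.mul hfactor.aemeasurable).congr ?_
  filter_upwards [hpos, Measure.ae_ne volume x] with y hvy hyx
  have hd := (Real.rpow_pos_of_pos (dist_pos.2 hyx.symm) ((n : ℝ) - α)).ne'
  simp only [Pi.mul_apply]
  field_simp

lemma preimage_toLp_setOf_lt_fracI_div_subset (hα : α < n) (f : ESp n → ℝ) (hv : ∀ x, 0 ≤ v x)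
    {t : ℝ} (ht : 0 ≤ t) :
    WithLp.toLp 2 ⁻¹' {x | t < fracI α (fun y ↦ f y * v y) x / v x}
      ⊆ {x : Fin n → ℝ | ENNReal.ofReal t * ENNReal.ofReal (v (.toLp 2 x))
          < ∫⁻ y : Fin n → ℝ, ENNReal.ofReal |f (.toLp 2 y)| * ENNReal.ofReal (v (.toLp 2 y))
              / edist x y ^ (n - α)} := by
  intro x (hx : t < _ / v (.toLp 2 x))
  have hvx : 0 < v (.toLp 2 x) := (hv _).lt_of_ne fun h ↦ by simp [← h, ht.not_gt] at hx
  rw [lt_div_iff₀ hvx] at hx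
  refine lt_of_lt_of_le ?_ (ofReal_fracI_le hα (fun y ↦ f y * v y) x) |>.trans_eq ?_
  · rw [← ENNReal.ofReal_mul ht]
    exact (ENNReal.ofReal_lt_ofReal_iff_of_nonneg (by positivity)).2 hx
  · simp only [abs_mul, abs_of_nonneg (hv _), ENNReal.ofReal_mul (abs_nonneg _)]

lemma lintegral_ofReal_abs_rpow_mul_eq {u : ESp n → ℝ} (hu : ∀ x, 0 ≤ u x) (hv : ∀ x, 0 ≤ v x)
    (hp : 0 ≤ p) {s : ℝ} (hs : 0 ≤ s) (f : ESp n → ℝ) :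
    ∫⁻ x, ENNReal.ofReal (|f x| ^ p * u x ^ s * v x)
      = ∫⁻ x : Fin n → ℝ, ENNReal.ofReal |f (.toLp 2 x)| ^ p * ENNReal.ofReal (u (.toLp 2 x)) ^ s
          * ENNReal.ofReal (v (.toLp 2 x)) := by
  rw [← (PiLp.volume_preserving_toLp (Fin n)).lintegral_comp_emb
    (MeasurableEquiv.toLp 2 (Fin n → ℝ)).measurableEmbedding]
  refine lintegral_congr fun _ ↦ ?_
  rw [ENNReal.ofReal_mul' (hv _), ENNReal.ofReal_mul' (Real.rpow_nonneg (hu _) _),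
    ENNReal.ofReal_rpow_of_nonneg (abs_nonneg _) hp, ENNReal.ofReal_rpow_of_nonneg (hu _) hs]

lemma ofReal_rpow_div_rpow_div {a : ℝ} (ha : 0 ≤ a) (hp : 0 < p) (hq : 0 < q) :
    ENNReal.ofReal (a ^ (q / p)) ^ (p / q) = ENNReal.ofReal a := by
  rw [ENNReal.ofReal_rpow_of_nonneg (by positivity) (by positivity), ← Real.rpow_mul ha,
    div_mul_div_cancel₀ hp.ne', div_self hq.ne', Real.rpow_one]

lemma exponent_relations_of_one_div_eq_sub {d : ℝ} (hα : 0 < α) (hd : 0 < d) (hp : 0 < p)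
    (hpα : p < d / α) (hq : 1 / q = 1 / p - α / d) :
    0 < q ∧ p < q ∧ d * (1 - (1 - p / q) / p) = d - α := by
  have hαd : 0 < α / d := by positivity
  have hαd_lt : α / d < 1 / p := by rwa [lt_one_div hαd hp, one_div_div]
  have hq₀ : 0 < q := one_div_pos.1 (by linarith)
  refine ⟨hq₀, (one_div_lt_one_div hq₀ hp).1 (by linarith), ?_⟩
  rw [sub_div, div_div_cancel_left' hp.ne', ← one_div q, hq]
  field_simp
  ring

end EuclideanSpace

end MixedWeakType

/-- **Berra–Carena–Pradolini, fractional integral case.**  Let `0 < α < n`, `1 ≤ p < n/α`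
and `1/q = 1/p - α/n`.  If `u ∈ A₁` and `v^{q/p} ∈ A₁`, then there is `C > 0` such that
for every `f` and `t > 0`,
`(uv^{q/p})({x : I_α(fv)(x)/v(x) > t})^{1/q} ≤ (C/t) (∫ |f|^p u^{p/q} v)^{1/p}`. -/
theorem BCP_fractional_integral {n : ℕ} (hn : 0 < n) (α p q : ℝ)
    (hα0 : 0 < α) (hα : α < (n : ℝ)) (hp1 : 1 ≤ p) (hp2 : p < (n : ℝ) / α)
    (hq : 1 / q = 1 / p - α / (n : ℝ))
    (u v : ESp n → ℝ) (hu : IsWeight u) (hv : IsWeight v)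
    (hu1 : IsA1 u) (hv1 : IsA1 (fun x => v x ^ (q / p))) :
    ∃ C : ℝ≥0∞, 0 < C ∧ C < ⊤ ∧
      ∀ (f : ESp n → ℝ) (t : ℝ), 0 < t →
        (wMeas (fun x => u x * v x ^ (q / p))
            {x : ESp n | t < fracI α (fun y => f y * v y) x / v x}) ^ (1 / q)
          ≤ (C / ENNReal.ofReal t) *
              (∫⁻ x, ENNReal.ofReal (|f x| ^ p * u x ^ (p / q) * v x)) ^ (1 / p) := by
  have hp : 0 < p := one_pos.trans_le hp1
  have : Nonempty (Fin n) := ⟨⟨0, hn⟩⟩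
  obtain ⟨hq0, hpq, hδ⟩ :=
    MixedWeakType.exponent_relations_of_one_div_eq_sub hα0 (Nat.cast_pos.2 hn) hp hp2 hq
  obtain ⟨hu_meas, hu_nonneg, hu_pos, -⟩ := hu
  obtain ⟨hv_meas, hv_nonneg, hv_pos, -⟩ := hv
  obtain ⟨Cu, hU⟩ := MixedWeakType.exists_isA1Weight_ofReal hu_meas hu_pos hu1
  obtain ⟨Cv, hV⟩ := MixedWeakType.exists_isA1Weight_ofReal (hv_meas.pow_const (q / p))
    (hv_pos.mono fun _ hx ↦ Real.rpow_pos_of_pos hx _) hv1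
  obtain ⟨C, hC0, hC, hweak⟩ :=
    hU.exists_weakType_lintegral_div_edist hV hp1 (div_pos hp hq0) ((div_lt_one hq0).2 hpq)
  simp only [MixedWeakType.ofReal_rpow_div_rpow_div (hv_nonneg _) hp hq0, Fintype.card_fin, hδ,
    div_div_cancel_left' hp.ne', ← one_div q] at hweak
  refine ⟨C, hC0, hC, fun f t ht ↦ ?_⟩
  by_cases hf : AEMeasurable f
  · rw [MixedWeakType.wMeas_eq_weightMeasure,
      MixedWeakType.lintegral_ofReal_abs_rpow_mul_eq hu_nonneg hv_nonneg hp.le (by positivity)]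
    refine le_trans ?_ (hweak _ (hf.comp_quasiMeasurePreserving (PiLp.volume_preserving_toLp
      (Fin n)).quasiMeasurePreserving).abs.ennreal_ofReal _ (ENNReal.ofReal_pos.2 ht).ne'
      ENNReal.ofReal_ne_top)
    simp only [ENNReal.ofReal_mul (hu_nonneg _)]
    gcongr
    exact MixedWeakType.preimage_toLp_setOf_lt_fracI_div_subset hα f hv_nonneg ht.le
  · simp [MixedWeakType.fracI_mul_eq_zero hn hv_meas hv_pos hf, wMeas, ht.not_gt, hq0]

end
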